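/- Let n ≥ 2 be an integer, let 0 < a < 1, and let s ∈ ℝ. For y ∈ (-1,1) and f ∈ C_c^∞(ℝⁿ \ {0}), let f_y be the function whose Fourier transform is f̂_y(ξ) = e^{i y |ξ|} f̂(ξ). Assume there exists a constant C > 0, independent of f, such that for every radial function f ∈ C_c^∞(ℝⁿ \ {0}): ∫_{-1}^{1} ‖S^a f_y‖²_{L²(Bⁿ, L^∞(B))} dy ≤ C ‖f‖²_{H^s(ℝⁿ)}. Then s ≥ a/4. -/

import Mathlib

/-!
Test the estimate on `f(x) = |x| ^ (-(n - 1) / 2) g(|x|)`, where `g` is a bump of width `1 / δ` at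
radius `1 / 2` modulated at frequency `N`. On the Fourier side of `f` the symbol `e ^ (i t |ξ| ^ a)`
is, up to a phase independent of `ξ`, close to the half-wave symbol `e ^ (i t v |ξ|)` with the group
velocity `v = a N ^ (a - 1)`; so at `y = ± z - v t` the function `S^a f_y` at time `t` is close to
the half-wave evolution of `f` for the time `± z`. The sum of these two evolutions is close to the
packet transported to radius `1 / 2 + z`, because `2 cos (z |ξ|)` solves the wave equation and the
factor `|x| ^ (-(n - 1) / 2)` removes the first-order term of the radial Laplacian, leaving only the
bounded potential `((n - 1) (n - 3) / 4) |x| ^ (-2)`.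

Hence one of the two signs carries a fixed part of the mass of `f` on a shell of thickness
comparable to `1 / δ` around the radius `1 / 2 + z`. For fixed `y` the shells visited at the times
`t = j / J`, `0 ≤ j < J`, are disjoint as soon as `v / J` exceeds that thickness, so the left side
of the estimate is at least a constant times `J ‖f‖₂ ^ 2`, whereas the right side is at most a
constant times `N ^ (2 max (s, 0)) ‖f‖₂ ^ 2`. The dispersion error allows `δ ~ N ^ (1 - a / 2)` and
therefore `J ~ N ^ (a / 2)`; letting `N → ∞` gives `a / 2 ≤ 2 s`.
-/

open MeasureTheory Real
open scoped InnerProductSpace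

noncomputable section

/-- The Fourier transform `f̂(ξ) = ∫ e^{-i x·ξ} f(x) dx` on `ℝⁿ`. -/
def FT (n : ℕ) (f : EuclideanSpace ℝ (Fin n) → ℂ) (ξ : EuclideanSpace ℝ (Fin n)) : ℂ :=
  ∫ x, Complex.exp (-(Complex.I * ((⟪x, ξ⟫_ℝ : ℝ) : ℂ))) * f x

/-- The oscillatory integral `S^a g(x,t) = (2π)^{-n} ∫ e^{i(x·ξ + t|ξ|^a)} ĝ(ξ) dξ`,
expressed in terms of the Fourier transform `g = ĝ` of the test object. -/
def SoscHat (n : ℕ) (a : ℝ) (g : EuclideanSpace ℝ (Fin n) → ℂ)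
    (x : EuclideanSpace ℝ (Fin n)) (t : ℝ) : ℂ :=
  (((2 * π) ^ n : ℝ) : ℂ)⁻¹ *
    ∫ ξ, Complex.exp (Complex.I * ((⟪x, ξ⟫_ℝ + t * ‖ξ‖ ^ a : ℝ) : ℂ)) * g ξ

open scoped FourierTransform

section L2

variable {X : Type*} [MeasurableSpace X] {μ : Measure X}

theorem enorm_add_sq_le {F : Type*} [SeminormedAddCommGroup F] (a b : F) :
    ‖a + b‖ₑ ^ 2 ≤ 2 * ‖a‖ₑ ^ 2 + 2 * ‖b‖ₑ ^ 2 := by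
  have h := (pow_le_pow_left₀ (norm_nonneg _) (norm_add_le a b) 2).trans (add_sq_le (a := ‖a‖))
  have h' := ENNReal.ofReal_le_ofReal h
  rw [mul_add, ENNReal.ofReal_add (by positivity) (by positivity)] at h'
  simpa only [ENNReal.ofReal_mul zero_le_two, ENNReal.ofReal_pow (norm_nonneg _), ofReal_norm,
    ENNReal.ofReal_ofNat] using h'

theorem lintegral_enorm_add_sq_le {f : X → ℂ} (hf : Measurable f) (g : X → ℂ) :
    ∫⁻ x, ‖f x + g x‖ₑ ^ 2 ∂μ ≤ 2 * ∫⁻ x, ‖f x‖ₑ ^ 2 ∂μ + 2 * ∫⁻ x, ‖g x‖ₑ ^ 2 ∂μ := by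
  rw [← lintegral_const_mul' _ _ ENNReal.ofNat_ne_top,
    ← lintegral_const_mul' _ _ ENNReal.ofNat_ne_top, ← lintegral_add_left (by fun_prop)]
  exact lintegral_mono fun x => enorm_add_sq_le _ _

theorem enorm_ofReal_mul_sq (c : ℝ) (z : ℂ) :
    ‖(c : ℂ) * z‖ₑ ^ 2 = ENNReal.ofReal (c ^ 2) * ‖z‖ₑ ^ 2 := by
  rw [enorm_mul, mul_pow, ← ofReal_norm (c : ℂ), Complex.norm_real,
    ← ENNReal.ofReal_pow (norm_nonneg _), Real.norm_eq_abs, sq_abs]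

theorem lintegral_enorm_ofReal_mul_sq (c : ℝ) (f : X → ℂ) :
    ∫⁻ x, ‖(c : ℂ) * f x‖ₑ ^ 2 ∂μ = ENNReal.ofReal (c ^ 2) * ∫⁻ x, ‖f x‖ₑ ^ 2 ∂μ := by
  simp only [enorm_ofReal_mul_sq, lintegral_const_mul' _ _ ENNReal.ofReal_ne_top]

end L2

section Plancherel

variable {E : Type*} [NormedAddCommGroup E] [InnerProductSpace ℝ E] [FiniteDimensional ℝ E]
  [MeasurableSpace E] [BorelSpace E]

theorem continuous_fourierInv {g : E → ℂ} (hg : Integrable g) : Continuous (𝓕⁻ g) := by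
  have hneg : 𝓕⁻ g = fun x => 𝓕 g (-x) := funext fun x => fourierInv_eq_fourier_neg g x
  rw [hneg]
  exact (VectorFourier.fourierIntegral_continuous continuous_fourierChar
    continuous_inner hg).comp continuous_neg

theorem integral_fourierInv_smul_eq {f g : E → ℂ} (hf : Integrable f) (hg : Integrable g) :
    ∫ x, 𝓕⁻ f x • g x = ∫ x, f x • 𝓕⁻ g x := by
  have hflip : (-innerₗ E).flip = -innerₗ E := by
    ext v w
    simp [real_inner_comm]
  have h := VectorFourier.integral_fourierIntegral_smul_eq_flip (μ := (volume : Measure E))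
    (ν := (volume : Measure E)) (e := fourierChar) (L := -innerₗ E)
    continuous_fourierChar continuous_inner.neg hf hg
  rwa [hflip] at h

theorem coeFn_fourierInv_toLp {g : E → ℂ} (h1 : Integrable g) (h2 : MemLp g 2) :
    ((𝓕⁻ (h2.toLp g) : Lp ℂ 2 (volume : Measure E)) : E → ℂ) =ᵐ[volume] 𝓕⁻ g := by
  refine ae_eq_of_integral_contDiff_smul_eq ((Lp.memLp _).locallyIntegrable (by norm_num))
    (continuous_fourierInv h1).locallyIntegrable fun φ hφ hφc => ?_
  have hΦc : HasCompactSupport (Complex.ofRealCLM ∘ φ) := hφc.comp_left rfl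
  let Φ : SchwartzMap E ℂ := hΦc.toSchwartzMap (by fun_prop)
  calc ∫ x, φ x • (𝓕⁻ (h2.toLp g) : Lp ℂ 2 (volume : Measure E)) x
      = ∫ x, (𝓕⁻ Φ) x • h2.toLp g x := by
        rw [← Lp.toTemperedDistribution_apply (h2.toLp g), ← TemperedDistribution.fourierInv_apply,
          Lp.fourierInv_toTemperedDistribution_eq, Lp.toTemperedDistribution_apply]
        rfl
    _ = ∫ x, 𝓕⁻ (Φ : E → ℂ) x • g x := by
        refine integral_congr_ae ?_
        filter_upwards [h2.coeFn_toLp] with x hx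
        rw [hx, SchwartzMap.fourierInv_coe]
    _ = ∫ x, φ x • 𝓕⁻ g x := integral_fourierInv_smul_eq Φ.integrable h1

theorem enorm_toLp_sq {g : E → ℂ} (hg : MemLp g 2) : ‖hg.toLp g‖ₑ ^ 2 = ∫⁻ x, ‖g x‖ₑ ^ 2 := by
  have h := eLpNorm_nnreal_pow_eq_lintegral (μ := (volume : Measure E)) (f := g) two_ne_zero
  rw [Lp.enorm_toLp]
  simpa only [NNReal.coe_ofNat, ENNReal.coe_ofNat, ENNReal.rpow_ofNat] using h

theorem lintegral_enorm_fourierInv_sq {g : E → ℂ} (h1 : Integrable g) (h2 : MemLp g 2) :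
    ∫⁻ x, ‖𝓕⁻ g x‖ₑ ^ 2 = ∫⁻ x, ‖g x‖ₑ ^ 2 := by
  have hmem : MemLp (𝓕⁻ g) 2 := (memLp_congr_ae (coeFn_fourierInv_toLp h1 h2)).1 (Lp.memLp _)
  have hLp : 𝓕⁻ (h2.toLp g) = hmem.toLp (𝓕⁻ g) :=
    Lp.ext ((coeFn_fourierInv_toLp h1 h2).trans hmem.coeFn_toLp.symm)
  have hnorm : ‖hmem.toLp (𝓕⁻ g)‖ₑ = ‖h2.toLp g‖ₑ := by
    rw [← hLp, ← ofReal_norm, ← Lp.norm_fourier_eq, FourierTransform.fourier_fourierInv_eq,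
      ofReal_norm]
  rw [← enorm_toLp_sq hmem, hnorm, enorm_toLp_sq]

theorem lintegral_enorm_fourier_sq (f : SchwartzMap E ℂ) :
    ∫⁻ x, ‖𝓕 (f : E → ℂ) x‖ₑ ^ 2 = ∫⁻ x, ‖f x‖ₑ ^ 2 := by
  rw [← SchwartzMap.fourier_coe, ← lintegral_enorm_fourierInv_sq (𝓕 f).integrable ((𝓕 f).memLp 2),
    ← SchwartzMap.fourierInv_coe, FourierTransform.fourierInv_fourier_eq]

open scoped Laplacian in
theorem fourier_laplacian_apply (f : SchwartzMap E ℂ) (η : E) :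
    𝓕 (Δ f) η = -((2 * π * ‖η‖) ^ 2 : ℝ) * 𝓕 f η := by
  rw [SchwartzMap.laplacian_eq_fourierMultiplierCLM, SchwartzMap.fourierMultiplierCLM_apply,
    FourierTransform.fourier_smul, FourierTransform.fourier_fourierInv_eq, smul_apply,
    SchwartzMap.smulLeftCLM_apply_apply (by fun_prop), Complex.real_smul, Complex.real_smul]
  push_cast
  ring

end Plancherel

theorem deriv_rpow_mul {ψ : ℝ → ℂ} (hψ : Differentiable ℝ ψ) (q : ℝ) {r : ℝ} (hr : 0 < r) :
    deriv (fun r => ((r ^ q : ℝ) : ℂ) * ψ r) r =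
      q * (((r ^ (q - 1) : ℝ) : ℂ) * ψ r) + ((r ^ q : ℝ) : ℂ) * deriv ψ r := by
  have hpow : HasDerivAt (fun r : ℝ => ((r ^ q : ℝ) : ℂ)) ((q * r ^ (q - 1) : ℝ) : ℂ) r :=
    (hasDerivAt_rpow_const (Or.inl hr.ne')).ofReal_comp
  rw [(hpow.fun_mul (hψ r).hasDerivAt).deriv]
  push_cast
  ring

theorem deriv_deriv_rpow_mul {ψ : ℝ → ℂ} (hψ : ContDiff ℝ 2 ψ) (q : ℝ) {r : ℝ} (hr : 0 < r) :
    deriv (deriv fun r => ((r ^ q : ℝ) : ℂ) * ψ r) r = ((r ^ q : ℝ) : ℂ) *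
      (deriv (deriv ψ) r + 2 * q * (r : ℂ)⁻¹ * deriv ψ r
        + q * (q - 1) * ((r : ℂ)⁻¹) ^ 2 * ψ r) := by
  have hψ1 : Differentiable ℝ ψ := hψ.differentiable two_ne_zero
  have hψ2 : Differentiable ℝ (deriv ψ) :=
    (hψ.iterate_deriv' 1 1).differentiable one_ne_zero
  have hpow : ∀ q : ℝ, DifferentiableAt ℝ (fun r : ℝ => ((r ^ q : ℝ) : ℂ)) r := fun q =>
    (hasDerivAt_rpow_const (Or.inl hr.ne')).ofReal_comp.differentiableAt
  have hfirst : deriv (fun r => ((r ^ q : ℝ) : ℂ) * ψ r) =ᶠ[nhds r] fun r =>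
      q * (((r ^ (q - 1) : ℝ) : ℂ) * ψ r) + ((r ^ q : ℝ) : ℂ) * deriv ψ r := by
    filter_upwards [Ioi_mem_nhds hr] with r hr using deriv_rpow_mul hψ1 q hr
  rw [hfirst.deriv_eq,
    deriv_fun_add (((hpow _).fun_mul (hψ1 r)).const_mul _) ((hpow q).fun_mul (hψ2 r)),
    deriv_const_mul _ ((hpow _).fun_mul (hψ1 r)), deriv_rpow_mul hψ1 (q - 1) hr,
    deriv_rpow_mul hψ2 q hr, rpow_sub_one hr.ne' (q - 1), rpow_sub_one hr.ne']
  push_cast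
  ring

section Polar

variable {E : Type*} [NormedAddCommGroup E] [NormedSpace ℝ E] [FiniteDimensional ℝ E]
  [MeasurableSpace E] [BorelSpace E]

theorem lintegral_fun_norm_addHaar [Nontrivial E] (μ : Measure E) [μ.IsAddHaarMeasure]
    {f : ℝ → ENNReal} (hf : Measurable f) :
    ∫⁻ x, f ‖x‖ ∂μ = μ.toSphere Set.univ *
      ∫⁻ r in Set.Ioi (0 : ℝ), ENNReal.ofReal (r ^ (Module.finrank ℝ E - 1)) * f r :=
  calc
    ∫⁻ x, f ‖x‖ ∂μ = ∫⁻ x : ({(0)}ᶜ : Set E), f ‖x.1‖ ∂(μ.comap (↑)) := by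
      rw [lintegral_subtype_comap (measurableSet_singleton _).compl fun x => f ‖x‖,
        restrict_compl_singleton]
    _ = ∫⁻ x, f x.2 ∂μ.toSphere.prod (.volumeIoiPow (Module.finrank ℝ E - 1)) := by
      simpa using μ.measurePreserving_homeomorphUnitSphereProd.lintegral_comp_emb
        (Homeomorph.measurableEmbedding _) (f ∘ Subtype.val ∘ Prod.snd)
    _ = μ.toSphere Set.univ *
        ∫⁻ x : Set.Ioi (0 : ℝ), f x ∂.volumeIoiPow (Module.finrank ℝ E - 1) := by
      rw [lintegral_prod _ (by fun_prop)]
      simp [mul_comm]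
    _ = _ := by
      rw [Measure.volumeIoiPow, lintegral_withDensity_eq_lintegral_mul _ (by fun_prop)
        (by fun_prop)]
      simp only [Pi.mul_apply]
      rw [lintegral_subtype_comap measurableSet_Ioi fun r =>
        ENNReal.ofReal (r ^ (Module.finrank ℝ E - 1)) * f r]

end Polar

/-- Smooth complex functions on the line supported in `[α, β]`; for `0 < α` they are the radial
profiles of smooth radial functions supported in an annulus. -/
structure IsProfile (α β : ℝ) (h : ℝ → ℂ) : Prop where
  contDiff : ContDiff ℝ (⊤ : ℕ∞) h
  eq_zero : ∀ r ∉ Set.Icc α β, h r = 0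

namespace IsProfile

variable {α β : ℝ} {h : ℝ → ℂ}

theorem differentiable (hh : IsProfile α β h) : Differentiable ℝ h :=
  hh.contDiff.differentiable (by simp)

theorem eventually_eq_zero (hh : IsProfile α β h) {r : ℝ} (hr : r ∉ Set.Icc α β) :
    h =ᶠ[nhds r] fun _ => 0 := by
  filter_upwards [isClosed_Icc.isOpen_compl.mem_nhds hr] with x hx using hh.eq_zero x hx

theorem derivative (hh : IsProfile α β h) : IsProfile α β (deriv h) where
  contDiff := ContDiff.iterate_deriv 1 hh.contDiff
  eq_zero r hr := by rw [(hh.eventually_eq_zero hr).deriv_eq, deriv_const]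

theorem comp_sub_const (hh : IsProfile α β h) (s : ℝ) :
    IsProfile (α + s) (β + s) fun r => h (r - s) where
  contDiff := hh.contDiff.comp (by fun_prop)
  eq_zero r hr := hh.eq_zero _ fun hmem => hr ⟨by linarith [hmem.1], by linarith [hmem.2]⟩

theorem hasCompactSupport (hh : IsProfile α β h) : HasCompactSupport h :=
  .intro isCompact_Icc hh.eq_zero

theorem mul_left {g : ℝ → ℂ} (hα : 0 < α) (hg : ContDiffOn ℝ (⊤ : ℕ∞) g (Set.Ioi 0))
    (hh : IsProfile α β h) : IsProfile α β fun r => g r * h r where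
  contDiff := contDiff_iff_contDiffAt.2 fun r => by
    by_cases hr : r ∈ Set.Icc α β
    · exact (hg.contDiffAt (Ioi_mem_nhds (hα.trans_le hr.1))).mul hh.contDiff.contDiffAt
    · refine (contDiffAt_const (c := 0)).congr_of_eventuallyEq ?_
      filter_upwards [hh.eventually_eq_zero hr] with x hx
      rw [hx, mul_zero]
  eq_zero r hr := by rw [hh.eq_zero r hr, mul_zero]

theorem rpow_mul (hα : 0 < α) (q : ℝ) (hh : IsProfile α β h) :
    IsProfile α β fun r => ((r ^ q : ℝ) : ℂ) * h r :=
  hh.mul_left hα fun _ hr => (Complex.ofRealCLM.contDiff.contDiffAt.comp _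
    (contDiffAt_rpow_const_of_ne (ne_of_gt hr))).contDiffWithinAt

section Radial

variable {E : Type*} [NormedAddCommGroup E]

theorem comp_norm_eventually_eq_zero (hh : IsProfile α β h) {x : E} (hx : ‖x‖ ∉ Set.Icc α β) :
    (fun y : E => h ‖y‖) =ᶠ[nhds x] fun _ => 0 :=
  (hh.eventually_eq_zero hx).comp_tendsto (continuous_norm.tendsto x)

theorem tsupport_comp_norm_subset (hh : IsProfile α β h) :
    tsupport (fun x : E => h ‖x‖) ⊆ {x | ‖x‖ ∈ Set.Icc α β} :=
  closure_minimal (fun _ hx => not_imp_comm.1 (hh.eq_zero _) hx)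
    (isClosed_Icc.preimage continuous_norm)

theorem zero_notMem_tsupport (hα : 0 < α) (hh : IsProfile α β h) :
    (0 : E) ∉ tsupport fun x : E => h ‖x‖ := fun h0 =>
  hα.not_ge (by simpa using (hh.tsupport_comp_norm_subset h0).1)

variable [InnerProductSpace ℝ E]

theorem contDiff_comp_norm (hα : 0 < α) (hh : IsProfile α β h) :
    ContDiff ℝ (⊤ : ℕ∞) fun x : E => h ‖x‖ := by
  refine contDiff_iff_contDiffAt.2 fun x => ?_
  by_cases hx : ‖x‖ ∈ Set.Icc α β
  · have hx0 : x ≠ 0 := norm_pos_iff.1 (hα.trans_le hx.1)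
    exact hh.contDiff.contDiffAt.comp x (contDiffAt_norm ℝ hx0)
  · exact contDiffAt_const.congr_of_eventuallyEq (hh.comp_norm_eventually_eq_zero hx)

variable [FiniteDimensional ℝ E]

theorem hasCompactSupport_comp_norm (hh : IsProfile α β h) :
    HasCompactSupport fun x : E => h ‖x‖ :=
  (isCompact_closedBall (0 : E) β).of_isClosed_subset (isClosed_tsupport _) fun _ hx => by
    simpa using (hh.tsupport_comp_norm_subset hx).2

variable (E) in
/-- The radial Schwartz function `x ↦ h ‖x‖` of a profile vanishing near the origin. -/
def toSchwartz (hα : 0 < α) (hh : IsProfile α β h) : SchwartzMap E ℂ :=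
  hh.hasCompactSupport_comp_norm.toSchwartzMap (hh.contDiff_comp_norm hα)

theorem toSchwartz_apply (hα : 0 < α) (hh : IsProfile α β h) (x : E) :
    hh.toSchwartz E hα x = h ‖x‖ := rfl

end Radial

end IsProfile

section RadialLaplacian

variable {E : Type*} [NormedAddCommGroup E] [InnerProductSpace ℝ E]

theorem hasDerivAt_comp_norm_add_smul {h : ℝ → ℂ} (hh : Differentiable ℝ h) {x : E} (hx : x ≠ 0)
    (m : E) :
    HasDerivAt (fun t : ℝ => h ‖x + t • m‖) (((⟪x, m⟫_ℝ / ‖x‖ : ℝ) : ℂ) * deriv h ‖x‖) 0 := by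
  have hline : HasDerivAt (fun t : ℝ => x + t • m) m 0 := by
    simpa using ((hasDerivAt_id (0 : ℝ)).smul_const m).const_add x
  have hnorm : HasDerivAt (fun t : ℝ => ‖x + t • m‖) (⟪x, m⟫_ℝ / ‖x‖) 0 := by
    have hsqrt := hline.norm_sq.sqrt (by simpa using hx)
    simp only [norm_nonneg, sqrt_sq, zero_smul, add_zero] at hsqrt
    convert hsqrt using 1
    field_simp
  have houter : HasDerivAt h (deriv h ‖x‖) ‖x + (0 : ℝ) • m‖ := by
    simpa using (hh ‖x‖).hasDerivAt
  exact houter.scomp (0 : ℝ) hnorm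

variable [FiniteDimensional ℝ E] {α β : ℝ} {h : ℝ → ℂ}

namespace IsProfile

open scoped LineDeriv Laplacian

theorem lineDerivOp_toSchwartz (hα : 0 < α) (hh : IsProfile α β h) (m x : E) :
    ∂_{m} (hh.toSchwartz E hα) x =
      ((⟪x, m⟫_ℝ : ℝ) : ℂ) * (hh.derivative.rpow_mul hα (-1)).toSchwartz E hα x := by
  rw [SchwartzMap.lineDerivOp_apply, lineDeriv]
  by_cases hx : x = 0
  · have hline : Filter.Tendsto (fun t : ℝ => x + t • m) (nhds 0) (nhds x) := by
      simpa using (show Continuous fun t : ℝ => x + t • m by fun_prop).tendsto 0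
    have hzero : (fun t : ℝ => hh.toSchwartz E hα (x + t • m)) =ᶠ[nhds 0] fun _ => 0 :=
      (hh.comp_norm_eventually_eq_zero (by simp [hx, hα])).comp_tendsto hline
    rw [hzero.deriv_eq, deriv_const, hx, inner_zero_left, Complex.ofReal_zero, zero_mul]
  · simp only [toSchwartz_apply]
    rw [(hasDerivAt_comp_norm_add_smul hh.differentiable hx m).deriv, rpow_neg_one]
    push_cast
    ring

theorem lineDerivOp_lineDerivOp_toSchwartz (hα : 0 < α) (hh : IsProfile α β h) (m x : E) :
    ∂_{m} (∂_{m} (hh.toSchwartz E hα)) x =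
      ((⟪m, m⟫_ℝ : ℝ) : ℂ) * (((‖x‖ ^ (-1 : ℝ) : ℝ) : ℂ) * deriv h ‖x‖) +
        ((⟪x, m⟫_ℝ ^ 2 : ℝ) : ℂ) * (((‖x‖ ^ (-1 : ℝ) : ℝ) : ℂ) *
          deriv (fun r => ((r ^ (-1 : ℝ) : ℝ) : ℂ) * deriv h r) ‖x‖) := by
  have hg := hh.derivative.rpow_mul hα (-1)
  have hprofile : HasDerivAt (fun t : ℝ => hg.toSchwartz E hα (x + t • m))
      (∂_{m} (hg.toSchwartz E hα) x) 0 := by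
    rw [SchwartzMap.lineDerivOp_apply]
    exact (hg.toSchwartz E hα).differentiableAt.lineDifferentiableAt.hasLineDerivAt
  have hinner : HasDerivAt (fun t : ℝ => ((⟪x + t • m, m⟫_ℝ : ℝ) : ℂ)) ((⟪m, m⟫_ℝ : ℝ) : ℂ) 0 := by
    refine HasDerivAt.ofReal_comp ?_
    simp only [inner_add_left, inner_smul_left]
    simpa using ((hasDerivAt_id (0 : ℝ)).mul_const ⟪m, m⟫_ℝ).const_add ⟪x, m⟫_ℝ
  rw [SchwartzMap.lineDerivOp_apply, lineDeriv]
  simp only [hh.lineDerivOp_toSchwartz hα m]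
  refine (hinner.mul hprofile).deriv.trans ?_
  rw [hg.lineDerivOp_toSchwartz hα m x]
  simp only [toSchwartz_apply, zero_smul, add_zero]
  push_cast
  ring

theorem laplacian_toSchwartz (hα : 0 < α) (hh : IsProfile α β h) (x : E) :
    Δ (hh.toSchwartz E hα) x = deriv (deriv h) ‖x‖ +
      ((Module.finrank ℝ E - 1 : ℝ) : ℂ) * (‖x‖ : ℂ)⁻¹ * deriv h ‖x‖ := by
  have hfinrank : ∑ i, ⟪stdOrthonormalBasis ℝ E i, stdOrthonormalBasis ℝ E i⟫_ℝ =
      Module.finrank ℝ E := by simp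
  rw [SchwartzMap.laplacian_eq_sum (stdOrthonormalBasis ℝ E), sum_apply]
  simp only [hh.lineDerivOp_lineDerivOp_toSchwartz hα]
  rw [Finset.sum_add_distrib, ← Finset.sum_mul, ← Finset.sum_mul, ← Complex.ofReal_sum,
    ← Complex.ofReal_sum, (stdOrthonormalBasis ℝ E).sum_sq_inner_left, hfinrank]
  by_cases hx : ‖x‖ ∈ Set.Icc α β
  · have hpos : 0 < ‖x‖ := hα.trans_le hx.1
    have hne : (‖x‖ : ℂ) ≠ 0 := by exact_mod_cast hpos.ne'
    rw [deriv_rpow_mul hh.derivative.differentiable (-1) hpos, rpow_sub_one hpos.ne', rpow_neg_one]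
    push_cast
    field_simp
    ring
  · rw [(hh.derivative.rpow_mul hα (-1)).derivative.eq_zero _ hx, hh.derivative.eq_zero _ hx,
      hh.derivative.derivative.eq_zero _ hx]
    simp only [mul_zero, add_zero]

end IsProfile

end RadialLaplacian

section RadialFn

/-- The radial function `x ↦ ‖x‖ ^ q * ψ ‖x‖`. -/
def radialFn {E : Type*} [NormedAddCommGroup E] (q : ℝ) (ψ : ℝ → ℂ) (x : E) : ℂ :=
  ((‖x‖ ^ q : ℝ) : ℂ) * ψ ‖x‖

/-- The exponent `-(d - 1) / 2`, `d = dim E`, for which `ψ ↦ ‖x‖ ^ p * ψ ‖x‖` is a multiple of an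
`L²` isometry. -/
def halfDensityExp (E : Type*) [AddCommGroup E] [Module ℝ E] : ℝ :=
  -(Module.finrank ℝ E - 1) / 2

/-- The constant `κ` in the one-dimensional Schrödinger operator `∂ᵣ² - κ / r²` to which the radial
Laplacian is conjugated by `‖x‖ ^ halfDensityExp E`. -/
def centrifugalConst (E : Type*) [AddCommGroup E] [Module ℝ E] : ℝ :=
  halfDensityExp E * (halfDensityExp E + 1)

variable {E : Type*} [NormedAddCommGroup E] [InnerProductSpace ℝ E] [FiniteDimensional ℝ E]
  {α β : ℝ} {ψ : ℝ → ℂ}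

theorem IsProfile.coe_toSchwartz_rpow_mul (hα : 0 < α) (hψ : IsProfile α β ψ) (q : ℝ) :
    ((hψ.rpow_mul hα q).toSchwartz E hα : E → ℂ) = radialFn q ψ := rfl

open scoped Laplacian in
theorem IsProfile.laplacian_radialFn (hα : 0 < α) (hψ : IsProfile α β ψ) (x : E) :
    Δ ((hψ.rpow_mul hα (halfDensityExp E)).toSchwartz E hα) x =
      radialFn (halfDensityExp E) (deriv (deriv ψ)) x -
        (centrifugalConst E : ℂ) * radialFn (halfDensityExp E - 2) ψ x := by
  rw [laplacian_toSchwartz]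
  by_cases hx : ‖x‖ ∈ Set.Icc α β
  · have hpos : 0 < ‖x‖ := hα.trans_le hx.1
    have hdim : (Module.finrank ℝ E : ℝ) - 1 = -2 * halfDensityExp E := by
      rw [halfDensityExp]
      ring
    rw [deriv_deriv_rpow_mul (hψ.contDiff.of_le (by norm_cast)) _ hpos,
      deriv_rpow_mul hψ.differentiable _ hpos, hdim, rpow_sub_one hpos.ne', radialFn, radialFn,
      centrifugalConst, rpow_sub hpos, rpow_two]
    push_cast
    ring
  · simp only [radialFn, hψ.derivative.derivative.eq_zero _ hx, hψ.eq_zero _ hx,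
      (hψ.rpow_mul hα _).derivative.eq_zero _ hx,
      (hψ.rpow_mul hα _).derivative.derivative.eq_zero _ hx]
    ring

variable [MeasurableSpace E] [BorelSpace E]

theorem IsProfile.integrable_radialFn (hα : 0 < α) (hψ : IsProfile α β ψ) (q : ℝ) :
    Integrable (radialFn q ψ : E → ℂ) := by
  rw [← hψ.coe_toSchwartz_rpow_mul hα]
  exact SchwartzMap.integrable _

theorem IsProfile.lintegral_enorm_fourier_radialFn_sq (hα : 0 < α) (hψ : IsProfile α β ψ)
    (q : ℝ) :
    ∫⁻ η : E, ‖𝓕 (radialFn q ψ : E → ℂ) η‖ₑ ^ 2 = ∫⁻ x : E, ‖radialFn q ψ x‖ₑ ^ 2 := by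
  rw [← hψ.coe_toSchwartz_rpow_mul hα, lintegral_enorm_fourier_sq]

theorem IsProfile.fourier_radialFn_deriv_deriv (hα : 0 < α) (hψ : IsProfile α β ψ) (η : E) :
    𝓕 (radialFn (halfDensityExp E) (deriv (deriv ψ)) : E → ℂ) η =
      -((2 * π * ‖η‖) ^ 2 : ℝ) * 𝓕 (radialFn (halfDensityExp E) ψ : E → ℂ) η +
        centrifugalConst E * 𝓕 (radialFn (halfDensityExp E - 2) ψ : E → ℂ) η := by
  have hsum : (hψ.derivative.derivative.rpow_mul hα (halfDensityExp E)).toSchwartz E hα =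
      Laplacian.laplacian ((hψ.rpow_mul hα (halfDensityExp E)).toSchwartz E hα) +
        (centrifugalConst E : ℂ) • (hψ.rpow_mul hα (halfDensityExp E - 2)).toSchwartz E hα := by
    ext x
    rw [add_apply, smul_apply, hψ.laplacian_radialFn hα, smul_eq_mul]
    exact (sub_add_cancel _ _).symm
  have hfourier := congrArg (fun f : SchwartzMap E ℂ => 𝓕 f η) hsum
  simp only [FourierTransform.fourier_add, FourierTransform.fourier_smul] at hfourier
  rwa [add_apply, smul_apply, fourier_laplacian_apply] at hfourier

variable (E) in
/-- The squared `L²(E)` norm of `radialFn (halfDensityExp E) ψ`. -/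
def radialMass (ψ : ℝ → ℂ) : ENNReal :=
  ∫⁻ x : E, ‖radialFn (halfDensityExp E) ψ x‖ₑ ^ 2

theorem radialMass_eq [Nontrivial E] (hψ : Measurable ψ) :
    radialMass E ψ = (volume : Measure E).toSphere Set.univ *
      ∫⁻ r in Set.Ioi (0 : ℝ), ‖ψ r‖ₑ ^ 2 := by
  rw [radialMass]
  refine (lintegral_fun_norm_addHaar (volume : Measure E)
    (f := fun r => ‖((r ^ halfDensityExp E : ℝ) : ℂ) * ψ r‖ₑ ^ 2) (by fun_prop)).trans ?_
  congr 1
  refine setLIntegral_congr_fun measurableSet_Ioi fun r (hr : 0 < r) => ?_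
  have hcancel : r ^ (Module.finrank ℝ E - 1) * (r ^ halfDensityExp E) ^ 2 = 1 := by
    rw [← rpow_natCast, ← rpow_natCast (r ^ _), ← rpow_mul hr.le, ← rpow_add hr,
      Nat.cast_pred Module.finrank_pos, halfDensityExp]
    push_cast
    ring_nf
    exact rpow_zero r
  rw [enorm_ofReal_mul_sq, ← mul_assoc, ← ENNReal.ofReal_mul (by positivity), hcancel,
    ENNReal.ofReal_one, one_mul]

end RadialFn

section Duhamel

theorem sq_lintegral_le {X : Type*} [MeasurableSpace X] (μ : Measure X) {f : X → ENNReal}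
    (hf : AEMeasurable f μ) : (∫⁻ x, f x ∂μ) ^ 2 ≤ μ Set.univ * ∫⁻ x, f x ^ 2 ∂μ := by
  have hHolder := ENNReal.lintegral_mul_le_Lp_mul_Lq μ Real.HolderConjugate.two_two hf
    (aemeasurable_const (b := (1 : ENNReal)))
  simp only [Pi.mul_apply, mul_one, lintegral_const, ENNReal.rpow_two, one_pow, one_mul] at hHolder
  refine (pow_le_pow_left₀ zero_le hHolder 2).trans_eq ?_
  rw [mul_pow, ← ENNReal.rpow_natCast, ← ENNReal.rpow_natCast, ← ENNReal.rpow_mul,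
    ← ENNReal.rpow_mul]
  norm_num [mul_comm]

theorem abs_sin_mul_div_le (k t : ℝ) : |sin (k * t) / k| ≤ |t| := by
  rcases eq_or_ne k 0 with rfl | hk
  · simp
  · rw [abs_div, div_le_iff₀ (abs_pos.2 hk), mul_comm |t|, ← abs_mul]
    exact abs_sin_le_abs

variable {h h' e : ℝ → ℂ} {k z : ℝ}

theorem hasDerivAt_cos_mul_add_sin_mul {s : ℝ} (hk : k ≠ 0) (hh : HasDerivAt h (h' s) s)
    (hh' : HasDerivAt h' (e s - (k ^ 2 : ℝ) * h s) s) :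
    HasDerivAt (fun s => ((cos (k * (z - s)) : ℝ) : ℂ) * h s +
      ((sin (k * (z - s)) / k : ℝ) : ℂ) * h' s) (((sin (k * (z - s)) / k : ℝ) : ℂ) * e s) s := by
  have hline : HasDerivAt (fun s : ℝ => k * (z - s)) (-k) s := by
    simpa using ((hasDerivAt_id s).const_sub z).const_mul k
  have hcos : HasDerivAt (fun s => ((cos (k * (z - s)) : ℝ) : ℂ))
      ((-sin (k * (z - s)) * -k : ℝ) : ℂ) s := hline.cos.ofReal_comp
  have hsin : HasDerivAt (fun s => ((sin (k * (z - s)) / k : ℝ) : ℂ))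
      ((cos (k * (z - s)) * -k / k : ℝ) : ℂ) s := (hline.sin.div_const k).ofReal_comp
  convert! (hcos.fun_mul hh).fun_add (hsin.fun_mul hh') using 1
  have hkc : (k : ℂ) ≠ 0 := by exact_mod_cast hk
  push_cast
  field_simp
  ring

theorem sub_cos_mul_eq_integral_sin_mul (hk : k ≠ 0) (hz : 0 ≤ z)
    (hh : ∀ s ∈ Set.Icc 0 z, HasDerivAt h (h' s) s)
    (hh' : ∀ s ∈ Set.Icc 0 z, HasDerivAt h' (e s - (k ^ 2 : ℝ) * h s) s)
    (h0 : h' 0 = 0) (he : ContinuousOn e (Set.Icc 0 z)) :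
    h z - (cos (k * z) : ℝ) * h 0 =
      ∫ s in Set.Ioc 0 z, ((sin (k * (z - s)) / k : ℝ) : ℂ) * e s := by
  rw [← Set.uIcc_of_le hz] at hh hh' he
  have hcont : ContinuousOn (fun s => ((sin (k * (z - s)) / k : ℝ) : ℂ) * e s) (Set.uIcc 0 z) :=
    (show Continuous fun s => ((sin (k * (z - s)) / k : ℝ) : ℂ) by fun_prop).continuousOn.mul he
  rw [← intervalIntegral.integral_of_le hz, intervalIntegral.integral_eq_sub_of_hasDerivAt
    (fun s hs => hasDerivAt_cos_mul_add_sin_mul hk (hh s hs) (hh' s hs)) hcont.intervalIntegrable]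
  simp [h0]

theorem enorm_sub_cos_mul_sq_le (hk : k ≠ 0) (hz : 0 ≤ z)
    (hh : ∀ s ∈ Set.Icc 0 z, HasDerivAt h (h' s) s)
    (hh' : ∀ s ∈ Set.Icc 0 z, HasDerivAt h' (e s - (k ^ 2 : ℝ) * h s) s)
    (h0 : h' 0 = 0) (he : ContinuousOn e (Set.Icc 0 z)) :
    ‖h z - (cos (k * z) : ℝ) * h 0‖ₑ ^ 2 ≤
      ENNReal.ofReal (z ^ 3) * ∫⁻ s in Set.Ioc 0 z, ‖e s‖ₑ ^ 2 := by
  have hmeas : AEMeasurable (fun s => ‖e s‖ₑ) (volume.restrict (Set.Ioc 0 z)) :=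
    ((he.mono Set.Ioc_subset_Icc_self).aestronglyMeasurable measurableSet_Ioc).enorm
  have hbound : ‖h z - (cos (k * z) : ℝ) * h 0‖ₑ ≤
      ENNReal.ofReal z * ∫⁻ s in Set.Ioc 0 z, ‖e s‖ₑ := by
    rw [sub_cos_mul_eq_integral_sin_mul hk hz hh hh' h0 he, ← lintegral_const_mul'' _ hmeas]
    refine (enorm_integral_le_lintegral_enorm _).trans
      (setLIntegral_mono' measurableSet_Ioc fun s hs => ?_)
    rw [enorm_mul, ← ofReal_norm (Complex.ofReal _), Complex.norm_real]
    gcongr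
    refine (abs_sin_mul_div_le k (z - s)).trans ?_
    rw [abs_of_nonneg (by linarith [hs.2])]
    linarith [hs.1]
  calc ‖h z - (cos (k * z) : ℝ) * h 0‖ₑ ^ 2
      ≤ ENNReal.ofReal z ^ 2 * (∫⁻ s in Set.Ioc 0 z, ‖e s‖ₑ) ^ 2 := by
        rw [← mul_pow]
        gcongr
    _ ≤ ENNReal.ofReal z ^ 2 * (ENNReal.ofReal z * ∫⁻ s in Set.Ioc 0 z, ‖e s‖ₑ ^ 2) := by
        gcongr
        simpa using sq_lintegral_le _ hmeas
    _ = ENNReal.ofReal (z ^ 3) * ∫⁻ s in Set.Ioc 0 z, ‖e s‖ₑ ^ 2 := by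
        rw [← mul_assoc, ENNReal.ofReal_pow hz]
        ring

end Duhamel

section FourierShell

/-- The Fourier transform of the shell `‖x‖ ^ q * ψ (‖x‖ - s)` obtained by moving the profile `ψ`
outwards by `s`. -/
def fourierShell {E : Type*} [NormedAddCommGroup E] [InnerProductSpace ℝ E] [MeasurableSpace E]
    [BorelSpace E] [FiniteDimensional ℝ E] (q : ℝ) (ψ : ℝ → ℂ) (s : ℝ) : E → ℂ :=
  𝓕 (radialFn q (fun r => ψ (r - s)) : E → ℂ)

variable {E : Type*} [NormedAddCommGroup E] [InnerProductSpace ℝ E] [FiniteDimensional ℝ E]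
  [MeasurableSpace E] [BorelSpace E] {α β : ℝ} {ψ : ℝ → ℂ}

theorem measurable_fourierShell (hψ : Measurable ψ) (q : ℝ) {X : Type*} [MeasurableSpace X]
    {s : X → ℝ} {η : X → E} (hs : Measurable s) (hη : Measurable η) :
    Measurable fun x => fourierShell q ψ (s x) (η x) := by
  have hintegrand : StronglyMeasurable fun w : X × E =>
      fourierChar (-⟪w.2, η w.1⟫_ℝ) • radialFn q (fun r => ψ (r - s w.1)) w.2 := by
    refine Measurable.stronglyMeasurable ?_
    simp only [Circle.smul_def, radialFn, smul_eq_mul]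
    have hchar : Measurable fun w : E × E => (fourierChar (-⟪w.2, w.1⟫_ℝ) : ℂ) :=
      Continuous.measurable (by fun_prop)
    exact (hchar.comp ((hη.comp measurable_fst).prodMk measurable_snd)).mul (by fun_prop)
  simp only [fourierShell, fourier_eq]
  exact hintegrand.integral_prod_right'.measurable

namespace IsProfile

theorem continuous_fourier_radialFn (hα : 0 < α) (hψ : IsProfile α β ψ) (q : ℝ) :
    Continuous (𝓕 (radialFn q ψ : E → ℂ)) := by
  rw [← hψ.coe_toSchwartz_rpow_mul hα, ← SchwartzMap.fourier_coe]
  exact (𝓕 ((hψ.rpow_mul hα q).toSchwartz E hα)).continuous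

theorem exists_norm_radialFn_comp_sub_le (E : Type*) [NormedAddCommGroup E]
    (hψ : IsProfile α β ψ) (q : ℝ) {s₁ s₂ : ℝ} (hs₁ : 0 < α + s₁) :
    ∃ M, ∀ s ∈ Set.Icc s₁ s₂, ∀ x : E, ‖radialFn q (fun r => ψ (r - s)) x‖ ≤
      (Metric.closedBall (0 : E) (β + s₂)).indicator (fun _ => M) x := by
  obtain ⟨M, hM⟩ := hψ.contDiff.continuous.bounded_above_of_compact_support hψ.hasCompactSupport
  obtain ⟨B, hB⟩ := (isCompact_Icc (a := α + s₁) (b := β + s₂)).exists_bound_of_continuousOn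
    (f := fun r : ℝ => r ^ q) fun r hr =>
      (continuousAt_rpow_const r q (Or.inl (hs₁.trans_le hr.1).ne')).continuousWithinAt
  refine ⟨max B 0 * M, fun s hs x => ?_⟩
  have hM0 : 0 ≤ M := (norm_nonneg _).trans (hM 0)
  by_cases hx : ‖x‖ - s ∈ Set.Icc α β
  · have hx' : ‖x‖ ∈ Set.Icc (α + s₁) (β + s₂) :=
      ⟨by linarith [hx.1, hs.1], by linarith [hx.2, hs.2]⟩
    rw [Set.indicator_of_mem (by simpa using hx'.2), radialFn, norm_mul, Complex.norm_real]
    exact mul_le_mul ((hB _ hx').trans (le_max_left _ _)) (hM _) (norm_nonneg _) (le_max_right _ _)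
  · rw [radialFn, hψ.eq_zero _ hx, mul_zero, norm_zero]
    exact Set.indicator_nonneg (fun _ _ => by positivity) _

theorem hasDerivAt_fourierShell (hψ : IsProfile α β ψ) (q : ℝ) (η : E) {s : ℝ} (hs : 0 < α + s) :
    HasDerivAt (fun s => fourierShell q ψ s η) (-fourierShell q (deriv ψ) s η) s := by
  have hs₁ : 0 < α + (s - (α + s) / 2) := by linarith
  have hnhds : Set.Icc (s - (α + s) / 2) (s + 1) ∈ nhds s :=
    Icc_mem_nhds (by linarith) (by linarith)
  obtain ⟨M, hM⟩ := hψ.derivative.exists_norm_radialFn_comp_sub_le E q (s₂ := s + 1) hs₁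
  have hint : ∀ {χ}, IsProfile α β χ → ∀ t ∈ Set.Icc (s - (α + s) / 2) (s + 1), Integrable
      fun x : E => fourierChar (-⟪x, η⟫_ℝ) • radialFn q (fun r => χ (r - t)) x := fun hχ t ht =>
    (fourierIntegral_convergent_iff η).2
      ((hχ.comp_sub_const t).integrable_radialFn (by linarith [ht.1]) q)
  have hderiv := (hasDerivAt_integral_of_dominated_loc_of_deriv_le (μ := (volume : Measure E))
    (F := fun s x => fourierChar (-⟪x, η⟫_ℝ) • radialFn q (fun r => ψ (r - s)) x)
    (F' := fun s x => -(fourierChar (-⟪x, η⟫_ℝ) • radialFn q (fun r => deriv ψ (r - s)) x))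
    (bound := (Metric.closedBall (0 : E) (β + (s + 1))).indicator (fun _ => M))
    hnhds ?_ (hint hψ s (mem_of_mem_nhds hnhds))
    (hint hψ.derivative s (mem_of_mem_nhds hnhds)).neg.aestronglyMeasurable
    (.of_forall fun x t ht => ?_) ?_ (.of_forall fun x t _ => ?_)).2
  · simp only [fourierShell, fourier_eq]
    rwa [integral_neg] at hderiv
  · filter_upwards [hnhds] with t ht using (hint hψ t ht).aestronglyMeasurable
  · rw [norm_neg, Circle.norm_smul]
    exact hM t ht x
  · rw [integrable_indicator_iff measurableSet_closedBall]
    exact integrableOn_const measure_closedBall_lt_top.ne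
  · have hshift : HasDerivAt (fun t => ψ (‖x‖ - t)) (-deriv ψ (‖x‖ - t)) t :=
      (hψ.differentiable (‖x‖ - t)).hasDerivAt.comp_const_sub ‖x‖ t
    simpa only [radialFn, mul_neg, smul_neg] using
      (hshift.const_mul ((‖x‖ ^ q : ℝ) : ℂ)).fun_const_smul (fourierChar (-⟪x, η⟫_ℝ))

theorem fourierShell_deriv_deriv (hψ : IsProfile α β ψ) {s : ℝ} (hs : 0 < α + s) (η : E) :
    fourierShell (halfDensityExp E) (deriv (deriv ψ)) s η =
      centrifugalConst E * fourierShell (halfDensityExp E - 2) ψ s η -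
        ((2 * π * ‖η‖) ^ 2 : ℝ) * fourierShell (halfDensityExp E) ψ s η := by
  have hderiv : ∀ χ : ℝ → ℂ, deriv (fun r => χ (r - s)) = fun r => deriv χ (r - s) := fun χ =>
    funext (deriv_comp_sub_const χ s)
  have hfourier := (hψ.comp_sub_const s).fourier_radialFn_deriv_deriv hs η
  rw [hderiv, hderiv] at hfourier
  rw [fourierShell, hfourier, fourierShell, fourierShell]
  ring

theorem enorm_radialFn_sub_two_sq_le {E : Type*} [NormedAddCommGroup E] (hα : 0 < α)
    (hψ : IsProfile α β ψ) (q : ℝ) (x : E) :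
    ‖radialFn (q - 2) ψ x‖ₑ ^ 2 ≤ ENNReal.ofReal (1 / α ^ 4) * ‖radialFn q ψ x‖ₑ ^ 2 := by
  by_cases hx : ‖x‖ ∈ Set.Icc α β
  · have hpos : 0 < ‖x‖ := hα.trans_le hx.1
    have hfactor : radialFn (q - 2) ψ x = (((‖x‖ ^ 2)⁻¹ : ℝ) : ℂ) * radialFn q ψ x := by
      rw [radialFn, radialFn, rpow_sub hpos, rpow_two]
      push_cast
      ring
    rw [hfactor, enorm_ofReal_mul_sq, inv_pow, ← pow_mul, ← one_div]
    gcongr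
    exact hx.1
  · rw [radialFn, hψ.eq_zero _ hx, mul_zero, enorm_zero, zero_pow two_ne_zero]
    exact zero_le

theorem lintegral_enorm_fourier_radialFn_sub_two_sq_le (hα : 0 < α) (hψ : IsProfile α β ψ) :
    ∫⁻ η : E, ‖𝓕 (radialFn (halfDensityExp E - 2) ψ : E → ℂ) η‖ₑ ^ 2 ≤
      ENNReal.ofReal (1 / α ^ 4) * radialMass E ψ := by
  rw [hψ.lintegral_enorm_fourier_radialFn_sq hα, radialMass,
    ← lintegral_const_mul' _ _ ENNReal.ofReal_ne_top]
  exact lintegral_mono (hψ.enorm_radialFn_sub_two_sq_le hα _)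

theorem radialMass_eq (hα : 0 < α) (hψ : IsProfile α β ψ) [Nontrivial E] :
    radialMass E ψ = (volume : Measure E).toSphere Set.univ * ∫⁻ r, ‖ψ r‖ₑ ^ 2 := by
  rw [_root_.radialMass_eq hψ.contDiff.continuous.measurable]
  congr 1
  refine setLIntegral_eq_of_support_subset fun r hr => ?_
  by_contra hneg
  exact hr (by simp [hψ.eq_zero r fun hmem => hneg (hα.trans_le hmem.1)])

theorem radialMass_comp_sub_const [Nontrivial E] (hα : 0 < α) (hψ : IsProfile α β ψ) {s : ℝ}
    (hs : 0 < α + s) : radialMass E (fun r => ψ (r - s)) = radialMass E ψ := by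
  rw [(hψ.comp_sub_const s).radialMass_eq hs, hψ.radialMass_eq hα,
    lintegral_sub_right_eq_self (fun r => ‖ψ r‖ₑ ^ 2) s]

end IsProfile

end FourierShell

section StandingWave

/-- The Fourier transform of the superposition of two copies of a shell, one moved outwards and one
moved inwards by `s`. In `s` it solves the oscillator equation of frequency `2π‖η‖` up to a forcing
term, so it stays close to `cos (2π‖η‖s)` times its initial value. -/
def standingWave {E : Type*} [NormedAddCommGroup E] [InnerProductSpace ℝ E] [MeasurableSpace E]
    [BorelSpace E] [FiniteDimensional ℝ E] (q : ℝ) (ψ : ℝ → ℂ) (s : ℝ) (η : E) : ℂ :=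
  fourierShell q ψ s η + fourierShell q ψ (-s) η

variable {E : Type*} [NormedAddCommGroup E] [InnerProductSpace ℝ E] [FiniteDimensional ℝ E]
  [MeasurableSpace E] [BorelSpace E] {α β s z : ℝ} {ψ : ℝ → ℂ}

theorem standingWave_zero (q : ℝ) (ψ : ℝ → ℂ) (η : E) :
    standingWave q ψ 0 η = 2 * 𝓕 (radialFn q ψ : E → ℂ) η := by
  simp only [standingWave, fourierShell, neg_zero, sub_zero, two_mul]

theorem measurable_standingWave (hψ : Measurable ψ) (q : ℝ) {X : Type*} [MeasurableSpace X]
    {s : X → ℝ} {η : X → E} (hs : Measurable s) (hη : Measurable η) :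
    Measurable fun x => standingWave q ψ (s x) (η x) :=
  (measurable_fourierShell hψ q hs hη).add (measurable_fourierShell hψ q hs.neg hη)

namespace IsProfile

theorem hasDerivAt_fourierShell_neg (hψ : IsProfile α β ψ) (q : ℝ) (η : E) (hs : s < α) :
    HasDerivAt (fun s => fourierShell q ψ (-s) η) (fourierShell q (deriv ψ) (-s) η) s := by
  simpa only [neg_one_smul, neg_neg, Function.comp_def] using
    (hψ.hasDerivAt_fourierShell q η (by linarith : 0 < α + -s)).scomp s (hasDerivAt_neg s)

theorem hasDerivAt_standingWave (hψ : IsProfile α β ψ) (q : ℝ) (η : E) (hs : |s| < α) :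
    HasDerivAt (fun s => standingWave q ψ s η)
      (fourierShell q (deriv ψ) (-s) η - fourierShell q (deriv ψ) s η) s := by
  rw [abs_lt] at hs
  rw [sub_eq_neg_add]
  exact (hψ.hasDerivAt_fourierShell q η (by linarith)).fun_add
    (hψ.hasDerivAt_fourierShell_neg q η hs.2)

theorem hasDerivAt_deriv_standingWave (hψ : IsProfile α β ψ) (η : E) (hs : |s| < α) :
    HasDerivAt (fun s => fourierShell (halfDensityExp E) (deriv ψ) (-s) η -
        fourierShell (halfDensityExp E) (deriv ψ) s η)
      (centrifugalConst E * standingWave (halfDensityExp E - 2) ψ s η -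
        ((2 * π * ‖η‖) ^ 2 : ℝ) * standingWave (halfDensityExp E) ψ s η) s := by
  rw [abs_lt] at hs
  have hs₁ : 0 < α + s := by linarith
  have hs₂ : 0 < α + -s := by linarith
  convert! (hψ.derivative.hasDerivAt_fourierShell_neg (halfDensityExp E) η hs.2).fun_sub
    (hψ.derivative.hasDerivAt_fourierShell (halfDensityExp E) η hs₁) using 1
  rw [hψ.fourierShell_deriv_deriv hs₁, hψ.fourierShell_deriv_deriv hs₂, standingWave, standingWave]
  ring

theorem lintegral_enorm_fourierShell_sub_two_sq_le [Nontrivial E] (hψ : IsProfile α β ψ)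
    (hs : |s| < α) :
    ∫⁻ η : E, ‖fourierShell (halfDensityExp E - 2) ψ s η‖ₑ ^ 2 ≤
      ENNReal.ofReal (1 / (α - |s|) ^ 4) * radialMass E ψ := by
  have hαs : α - |s| ≤ α + s := by linarith [neg_abs_le s]
  have hpos : 0 < α - |s| := by linarith
  refine ((hψ.comp_sub_const s).lintegral_enorm_fourier_radialFn_sub_two_sq_le
    (hpos.trans_le hαs)).trans ?_
  rw [hψ.radialMass_comp_sub_const ((abs_nonneg s).trans_lt hs) (hpos.trans_le hαs)]
  gcongr

theorem lintegral_enorm_standingWave_sub_two_sq_le [Nontrivial E] (hψ : IsProfile α β ψ)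
    (hs : |s| < α) :
    ∫⁻ η : E, ‖standingWave (halfDensityExp E - 2) ψ s η‖ₑ ^ 2 ≤
      ENNReal.ofReal (4 / (α - |s|) ^ 4) * radialMass E ψ := by
  have hmeas : Measurable (fourierShell (halfDensityExp E - 2) ψ s : E → ℂ) :=
    measurable_fourierShell hψ.contDiff.continuous.measurable _ measurable_const measurable_id
  have hneg := hψ.lintegral_enorm_fourierShell_sub_two_sq_le (E := E) (s := -s) (by rwa [abs_neg])
  rw [abs_neg] at hneg
  calc ∫⁻ η : E, ‖standingWave (halfDensityExp E - 2) ψ s η‖ₑ ^ 2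
      ≤ 2 * (ENNReal.ofReal (1 / (α - |s|) ^ 4) * radialMass E ψ) +
          2 * (ENNReal.ofReal (1 / (α - |s|) ^ 4) * radialMass E ψ) := by
        refine (lintegral_enorm_add_sq_le hmeas _).trans ?_
        gcongr
        exact hψ.lintegral_enorm_fourierShell_sub_two_sq_le hs
    _ = ENNReal.ofReal (4 / (α - |s|) ^ 4) * radialMass E ψ := by
        rw [← mul_one_div 4, ENNReal.ofReal_mul (by norm_num), ENNReal.ofReal_ofNat]
        ring

theorem enorm_standingWave_sub_cos_mul_sq_le (hψ : IsProfile α β ψ) (hz : 0 ≤ z) (hzα : z < α)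
    {η : E} (hη : η ≠ 0) :
    ‖standingWave (halfDensityExp E) ψ z η - (cos (2 * π * ‖η‖ * z) : ℝ) *
        (2 * 𝓕 (radialFn (halfDensityExp E) ψ : E → ℂ) η)‖ₑ ^ 2 ≤
      ENNReal.ofReal (z ^ 3) * ∫⁻ s in Set.Ioc 0 z,
        ‖(centrifugalConst E : ℂ) * standingWave (halfDensityExp E - 2) ψ s η‖ₑ ^ 2 := by
  have habs : ∀ s ∈ Set.Icc 0 z, |s| < α := fun s hs => by
    rw [abs_of_nonneg hs.1]
    exact hs.2.trans_lt hzα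
  have hk : 2 * π * ‖η‖ ≠ 0 := mul_ne_zero two_pi_pos.ne' (norm_ne_zero_iff.2 hη)
  rw [← standingWave_zero]
  exact enorm_sub_cos_mul_sq_le (h := fun s => standingWave (halfDensityExp E) ψ s η)
    (e := fun s => (centrifugalConst E : ℂ) * standingWave (halfDensityExp E - 2) ψ s η) hk hz
    (fun s hs => hψ.hasDerivAt_standingWave _ η (habs s hs))
    (fun s hs => hψ.hasDerivAt_deriv_standingWave η (habs s hs)) (by simp only [neg_zero, sub_self])
    fun s hs => ((hψ.hasDerivAt_standingWave _ η (habs s hs)).continuousAt.const_mul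
      _).continuousWithinAt

theorem lintegral_enorm_standingWave_sub_cos_mul_sq_le [Nontrivial E] (hψ : IsProfile α β ψ)
    (hz : 0 ≤ z) (hzα : z < α) :
    ∫⁻ η : E, ‖standingWave (halfDensityExp E) ψ z η - (cos (2 * π * ‖η‖ * z) : ℝ) *
        (2 * 𝓕 (radialFn (halfDensityExp E) ψ : E → ℂ) η)‖ₑ ^ 2 ≤
      ENNReal.ofReal (4 * centrifugalConst E ^ 2 * z ^ 4 / (α - z) ^ 4) * radialMass E ψ := by
  set forcing : ℝ → E → ℂ := fun s η =>
    (centrifugalConst E : ℂ) * standingWave (halfDensityExp E - 2) ψ s η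
  have hmeas : Measurable fun w : E × ℝ => ‖forcing w.2 w.1‖ₑ ^ 2 :=
    ((measurable_standingWave hψ.contDiff.continuous.measurable _ measurable_snd
      measurable_fst).const_mul _).enorm.pow_const 2
  have hforcing : ∀ s ∈ Set.Ioc 0 z, ∫⁻ η, ‖forcing s η‖ₑ ^ 2 ≤
      ENNReal.ofReal (centrifugalConst E ^ 2 * (4 / (α - z) ^ 4)) * radialMass E ψ := by
    intro s hs
    have habs : |s| ≤ z := (abs_of_pos hs.1).trans_le hs.2
    rw [lintegral_enorm_ofReal_mul_sq, ENNReal.ofReal_mul (sq_nonneg _), mul_assoc]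
    gcongr
    refine (hψ.lintegral_enorm_standingWave_sub_two_sq_le (habs.trans_lt hzα)).trans ?_
    gcongr
  calc _ ≤ ∫⁻ η, ENNReal.ofReal (z ^ 3) * ∫⁻ s in Set.Ioc 0 z, ‖forcing s η‖ₑ ^ 2 := by
        refine lintegral_mono_ae ?_
        filter_upwards [volume.ae_ne (0 : E)] with η hη
        exact hψ.enorm_standingWave_sub_cos_mul_sq_le hz hzα hη
    _ = ENNReal.ofReal (z ^ 3) * ∫⁻ s in Set.Ioc 0 z, ∫⁻ η, ‖forcing s η‖ₑ ^ 2 := by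
        rw [lintegral_const_mul' _ _ ENNReal.ofReal_ne_top,
          lintegral_lintegral_swap hmeas.aemeasurable]
    _ ≤ ENNReal.ofReal (z ^ 3) * ∫⁻ _ in Set.Ioc 0 z,
          ENNReal.ofReal (centrifugalConst E ^ 2 * (4 / (α - z) ^ 4)) * radialMass E ψ :=
        mul_le_mul_right (setLIntegral_mono' measurableSet_Ioc hforcing) _
    _ = ENNReal.ofReal (4 * centrifugalConst E ^ 2 * z ^ 4 / (α - z) ^ 4) * radialMass E ψ := by
        rw [setLIntegral_const, Real.volume_Ioc, sub_zero, mul_right_comm, ← mul_assoc,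
          ← mul_assoc, ← ENNReal.ofReal_mul (by positivity), ← ENNReal.ofReal_mul (by positivity)]
        ring_nf

end IsProfile

end StandingWave

section Packet

/-- A smooth cutoff from `[-1, 1]` to `[-1 / 2, 1 / 2]`, with a bound `M` on its first two
derivatives. -/
structure IsCutoff (φ : ℝ → ℝ) (M : ℝ) : Prop where
  contDiff : ContDiff ℝ (⊤ : ℕ∞) φ
  eq_zero : ∀ u, 1 ≤ |u| → φ u = 0
  eq_one : ∀ u, |u| ≤ 1 / 2 → φ u = 1
  abs_deriv_le : ∀ u, |deriv φ u| ≤ M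
  abs_deriv_deriv_le : ∀ u, |deriv (deriv φ) u| ≤ M

theorem exists_isCutoff : ∃ φ M, IsCutoff φ M := by
  let b : ContDiffBump (0 : ℝ) := ⟨1 / 2, 1, by norm_num, by norm_num⟩
  have hb' : ContDiff ℝ (⊤ : ℕ∞) (deriv b) := ContDiff.iterate_deriv 1 b.contDiff
  have hb'' : ContDiff ℝ (⊤ : ℕ∞) (deriv (deriv b)) := ContDiff.iterate_deriv 1 hb'
  obtain ⟨M₁, hM₁⟩ := hb'.continuous.bounded_above_of_compact_support b.hasCompactSupport.deriv
  obtain ⟨M₂, hM₂⟩ :=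
    hb''.continuous.bounded_above_of_compact_support b.hasCompactSupport.deriv.deriv
  exact ⟨b, max M₁ M₂, b.contDiff, fun u hu => b.zero_of_le_dist (by simpa using hu),
    fun u hu => b.one_of_mem_closedBall (by rwa [mem_closedBall_zero_iff]),
    fun u => (hM₁ u).trans (le_max_left _ _), fun u => (hM₂ u).trans (le_max_right _ _)⟩

/-- The one-dimensional wave packet of frequency `N` and width of order `1 / δ` centred at
`1 / 2`. -/
def packet (φ : ℝ → ℝ) (δ N r : ℝ) : ℂ :=
  (φ (δ * (r - 1 / 2)) : ℂ) * Complex.exp (Complex.I * ((N * r : ℝ) : ℂ))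

variable {φ : ℝ → ℝ} {M δ N r : ℝ}

theorem norm_packet (φ : ℝ → ℝ) (δ N r : ℝ) : ‖packet φ δ N r‖ = |φ (δ * (r - 1 / 2))| := by
  rw [packet, norm_mul, Complex.norm_exp_I_mul_ofReal, mul_one, Complex.norm_real, norm_eq_abs]

theorem contDiff_packet (hφ : ContDiff ℝ (⊤ : ℕ∞) φ) (δ N : ℝ) :
    ContDiff ℝ (⊤ : ℕ∞) (packet φ δ N) := by
  have hscaled : ContDiff ℝ (⊤ : ℕ∞) fun r : ℝ => φ (δ * (r - 1 / 2)) := by fun_prop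
  exact (Complex.ofRealCLM.contDiff.comp hscaled).mul (Complex.contDiff_exp.comp
    (contDiff_const.mul (Complex.ofRealCLM.contDiff.comp (contDiff_const.mul contDiff_id))))

theorem deriv_packet (hφ : Differentiable ℝ φ) (δ N r : ℝ) :
    deriv (packet φ δ N) r = δ * packet (deriv φ) δ N r + Complex.I * N * packet φ δ N r := by
  have hscale : HasDerivAt (fun r : ℝ => δ * (r - 1 / 2)) δ r := by
    simpa only [mul_one, id] using ((hasDerivAt_id r).sub_const (1 / 2)).const_mul δ
  have hcutoff : HasDerivAt (fun r => ((φ (δ * (r - 1 / 2)) : ℝ) : ℂ))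
      ((deriv φ (δ * (r - 1 / 2)) * δ : ℝ) : ℂ) r :=
    ((hφ _).hasDerivAt.comp r hscale).ofReal_comp
  have hphase : HasDerivAt (fun r : ℝ => ((N * r : ℝ) : ℂ)) ((N : ℝ) : ℂ) r :=
    (hasDerivAt_const_mul N).ofReal_comp
  unfold packet
  rw [(hcutoff.fun_mul (hphase.const_mul Complex.I).cexp).deriv]
  push_cast
  ring

theorem deriv_deriv_packet_add (hφ : ContDiff ℝ (⊤ : ℕ∞) φ) (δ N r : ℝ) :
    deriv (deriv (packet φ δ N)) r + (N ^ 2 : ℝ) * packet φ δ N r =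
      δ ^ 2 * packet (deriv (deriv φ)) δ N r +
        2 * Complex.I * N * δ * packet (deriv φ) δ N r := by
  have hφ' : ContDiff ℝ (⊤ : ℕ∞) (deriv φ) := ContDiff.iterate_deriv 1 hφ
  have hdiff : ∀ {χ : ℝ → ℝ}, ContDiff ℝ (⊤ : ℕ∞) χ → DifferentiableAt ℝ (packet χ δ N) r :=
    fun hχ => (contDiff_packet hχ δ N).differentiable (by simp) r
  rw [funext (deriv_packet (hφ.differentiable (by simp)) δ N),
    deriv_fun_add ((hdiff hφ').const_mul _) ((hdiff hφ).const_mul _),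
    deriv_const_mul _ (hdiff hφ'), deriv_const_mul _ (hdiff hφ),
    deriv_packet (hφ'.differentiable (by simp)), deriv_packet (hφ.differentiable (by simp))]
  push_cast
  linear_combination (N : ℂ) ^ 2 * packet φ δ N r * Complex.I_sq

namespace IsCutoff

theorem eventually_eq_zero (hφ : IsCutoff φ M) {u : ℝ} (hu : 1 < |u|) :
    φ =ᶠ[nhds u] fun _ => 0 := by
  filter_upwards [(isOpen_lt continuous_const continuous_abs).mem_nhds hu] with v hv
    using hφ.eq_zero v (le_of_lt hv)

theorem packet_eq_zero (hφ : IsCutoff φ M) (hδ : 0 < δ) (hr : 1 / δ ≤ |r - 1 / 2|) :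
    packet φ δ N r = 0 := by
  rw [div_le_iff₀' hδ, ← abs_of_pos hδ, ← abs_mul] at hr
  rw [packet, hφ.eq_zero _ hr, Complex.ofReal_zero, zero_mul]

theorem isProfile_packet (hφ : IsCutoff φ M) (hδ : 8 ≤ δ) (N : ℝ) :
    IsProfile (3 / 8) (5 / 8) (packet φ δ N) where
  contDiff := contDiff_packet hφ.contDiff δ N
  eq_zero r hr := by
    have hδ' : 1 / δ ≤ 1 / 8 := one_div_le_one_div_of_le (by norm_num) hδ
    refine hφ.packet_eq_zero (by linarith) (hδ'.trans ?_)
    contrapose! hr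
    rw [abs_lt] at hr
    exact ⟨by linarith [hr.1], by linarith [hr.2]⟩

theorem le_lintegral_packet (hφ : IsCutoff φ M) (hδ : 0 < δ) (N : ℝ) :
    ENNReal.ofReal (1 / δ) ≤ ∫⁻ r, ‖packet φ δ N r‖ₑ ^ 2 := by
  have hone : ∀ r ∈ Metric.closedBall (1 / 2) (1 / (2 * δ)), 1 ≤ ‖packet φ δ N r‖ₑ ^ 2 := by
    intro r hr
    rw [← ofReal_norm, norm_packet, hφ.eq_one]
    · simp
    · calc |δ * (r - 1 / 2)| = δ * |r - 1 / 2| := by rw [abs_mul, abs_of_pos hδ]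
        _ ≤ δ * (1 / (2 * δ)) := mul_le_mul_of_nonneg_left hr hδ.le
        _ = 1 / 2 := by field_simp
  calc ENNReal.ofReal (1 / δ) = ∫⁻ _ in Metric.closedBall (1 / 2 : ℝ) (1 / (2 * δ)), 1 := by
        rw [setLIntegral_one, Real.volume_closedBall]
        congr 1
        field_simp
    _ ≤ ∫⁻ r in Metric.closedBall (1 / 2) (1 / (2 * δ)), ‖packet φ δ N r‖ₑ ^ 2 :=
        setLIntegral_mono' measurableSet_closedBall hone
    _ ≤ ∫⁻ r, ‖packet φ δ N r‖ₑ ^ 2 := setLIntegral_le_lintegral _ _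

theorem norm_deriv_deriv_packet_add_le (hφ : IsCutoff φ M) (hδ : 0 < δ) (hN : δ ≤ N) (r : ℝ) :
    ‖deriv (deriv (packet φ δ N)) r + (N ^ 2 : ℝ) * packet φ δ N r‖ ≤
      (Metric.closedBall (1 / 2) (1 / δ)).indicator (fun _ => 3 * M * N * δ) r := by
  rw [deriv_deriv_packet_add hφ.contDiff]
  by_cases hr : r ∈ Metric.closedBall (1 / 2) (1 / δ)
  · have hM : 0 ≤ M := (abs_nonneg _).trans (hφ.abs_deriv_le 0)
    have hN0 : 0 < N := hδ.trans_le hN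
    rw [Set.indicator_of_mem hr]
    refine (norm_add_le _ _).trans ?_
    simp only [norm_mul, norm_packet, norm_pow, Complex.norm_real, Complex.norm_I,
      Complex.norm_ofNat, norm_eq_abs, mul_one, abs_of_pos hδ, abs_of_pos hN0]
    calc _ ≤ δ ^ 2 * M + 2 * N * δ * M := by
          gcongr
          exacts [hφ.abs_deriv_deriv_le _, hφ.abs_deriv_le _]
      _ ≤ 3 * M * N * δ := by nlinarith [mul_nonneg hM hδ.le]
  · have hout : 1 < |δ * (r - 1 / 2)| := by
      rw [Metric.mem_closedBall, dist_eq, not_le, div_lt_iff₀' hδ] at hr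
      rwa [abs_mul, abs_of_pos hδ]
    have hzero := hφ.eventually_eq_zero hout
    simp only [packet, hzero.deriv.deriv_eq, hzero.deriv_eq, deriv_const', deriv_const,
      Set.indicator_of_notMem hr, Complex.ofReal_zero, zero_mul, mul_zero, add_zero, norm_zero,
      le_refl]

theorem lintegral_deriv_deriv_packet_add_le (hφ : IsCutoff φ M) (hδ : 0 < δ) (hN : δ ≤ N) :
    ∫⁻ r, ‖deriv (deriv (packet φ δ N)) r + (N ^ 2 : ℝ) * packet φ δ N r‖ₑ ^ 2 ≤
      ENNReal.ofReal (18 * M ^ 2 * N ^ 2 * δ ^ 2) * ∫⁻ r, ‖packet φ δ N r‖ₑ ^ 2 := by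
  have hpointwise : ∀ r, ‖deriv (deriv (packet φ δ N)) r + (N ^ 2 : ℝ) * packet φ δ N r‖ₑ ^ 2 ≤
      (Metric.closedBall (1 / 2) (1 / δ)).indicator
        (fun _ => ENNReal.ofReal ((3 * M * N * δ) ^ 2)) r := by
    intro r
    have hnorm := hφ.norm_deriv_deriv_packet_add_le hδ hN r
    rw [← ofReal_norm, ← ENNReal.ofReal_pow (norm_nonneg _)]
    by_cases hr : r ∈ Metric.closedBall (1 / 2) (1 / δ)
    · rw [Set.indicator_of_mem hr] at hnorm ⊢
      gcongr
    · rw [Set.indicator_of_notMem hr] at hnorm ⊢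
      rw [le_antisymm hnorm (norm_nonneg _), zero_pow two_ne_zero, ENNReal.ofReal_zero]
  calc _ ≤ ∫⁻ r, (Metric.closedBall (1 / 2) (1 / δ)).indicator
          (fun _ => ENNReal.ofReal ((3 * M * N * δ) ^ 2)) r := lintegral_mono hpointwise
    _ = ENNReal.ofReal (18 * M ^ 2 * N ^ 2 * δ ^ 2) * ENNReal.ofReal (1 / δ) := by
        rw [lintegral_indicator measurableSet_closedBall, setLIntegral_const,
          Real.volume_closedBall, ← ENNReal.ofReal_mul (by positivity),
          ← ENNReal.ofReal_mul (by positivity)]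
        congr 1
        ring
    _ ≤ ENNReal.ofReal (18 * M ^ 2 * N ^ 2 * δ ^ 2) * ∫⁻ r, ‖packet φ δ N r‖ₑ ^ 2 := by
        gcongr
        exact hφ.le_lintegral_packet hδ N

end IsCutoff

end Packet

section FrequencyLocalisation

variable {E : Type*} [NormedAddCommGroup E] [InnerProductSpace ℝ E] [FiniteDimensional ℝ E]
  [MeasurableSpace E] [BorelSpace E] {α β : ℝ} {ψ : ℝ → ℂ}

namespace IsProfile

theorem deriv_deriv_add (hψ : IsProfile α β ψ) (ω : ℝ) :
    IsProfile α β fun r => deriv (deriv ψ) r + (ω ^ 2 : ℝ) * ψ r where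
  contDiff := hψ.derivative.derivative.contDiff.add (contDiff_const.mul hψ.contDiff)
  eq_zero r hr := by
    rw [hψ.derivative.derivative.eq_zero r hr, hψ.eq_zero r hr, mul_zero, add_zero]

theorem fourier_radialFn_deriv_deriv_add (hα : 0 < α) (hψ : IsProfile α β ψ) (ω q : ℝ) (η : E) :
    𝓕 (radialFn q (fun r => deriv (deriv ψ) r + (ω ^ 2 : ℝ) * ψ r) : E → ℂ) η =
      𝓕 (radialFn q (deriv (deriv ψ)) : E → ℂ) η +
        (ω ^ 2 : ℝ) * 𝓕 (radialFn q ψ : E → ℂ) η := by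
  have hsum : ((hψ.deriv_deriv_add ω).rpow_mul hα q).toSchwartz E hα =
      (hψ.derivative.derivative.rpow_mul hα q).toSchwartz E hα +
        ((ω ^ 2 : ℝ) : ℂ) • (hψ.rpow_mul hα q).toSchwartz E hα := by
    ext x
    simp only [add_apply, smul_apply, toSchwartz_apply, smul_eq_mul]
    ring
  have hfourier := congrArg (fun f : SchwartzMap E ℂ => 𝓕 f η) hsum
  simp only [FourierTransform.fourier_add, FourierTransform.fourier_smul] at hfourier
  exact hfourier

theorem lintegral_enorm_sq_sub_sq_mul_fourier_radialFn_sq_le (hα : 0 < α) (hψ : IsProfile α β ψ)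
    (ω : ℝ) :
    ∫⁻ η : E, ‖(((2 * π * ‖η‖) ^ 2 - ω ^ 2 : ℝ) : ℂ) *
        𝓕 (radialFn (halfDensityExp E) ψ : E → ℂ) η‖ₑ ^ 2 ≤
      ENNReal.ofReal (2 * centrifugalConst E ^ 2 / α ^ 4) * radialMass E ψ +
        2 * radialMass E fun r => deriv (deriv ψ) r + (ω ^ 2 : ℝ) * ψ r := by
  set p := halfDensityExp E
  set χ : ℝ → ℂ := fun r => deriv (deriv ψ) r + (ω ^ 2 : ℝ) * ψ r
  have hsplit : ∀ η : E, (((2 * π * ‖η‖) ^ 2 - ω ^ 2 : ℝ) : ℂ) * 𝓕 (radialFn p ψ : E → ℂ) η =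
      (centrifugalConst E : ℂ) * 𝓕 (radialFn (p - 2) ψ : E → ℂ) η +
        -𝓕 (radialFn p χ : E → ℂ) η := fun η => by
    rw [hψ.fourier_radialFn_deriv_deriv_add hα, hψ.fourier_radialFn_deriv_deriv hα]
    push_cast
    ring
  have hmeas : Measurable (𝓕 (radialFn (p - 2) ψ : E → ℂ)) :=
    (hψ.continuous_fourier_radialFn hα _).measurable
  calc _ ≤ 2 * (ENNReal.ofReal (centrifugalConst E ^ 2) *
          ∫⁻ η, ‖𝓕 (radialFn (p - 2) ψ : E → ℂ) η‖ₑ ^ 2) +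
          2 * ∫⁻ η, ‖𝓕 (radialFn p χ : E → ℂ) η‖ₑ ^ 2 := by
        simp only [hsplit]
        refine (lintegral_enorm_add_sq_le (hmeas.const_mul _) _).trans_eq ?_
        simp only [lintegral_enorm_ofReal_mul_sq, enorm_neg]
    _ ≤ 2 * (ENNReal.ofReal (centrifugalConst E ^ 2) *
          (ENNReal.ofReal (1 / α ^ 4) * radialMass E ψ)) + 2 * radialMass E χ := by
        rw [(hψ.deriv_deriv_add ω).lintegral_enorm_fourier_radialFn_sq hα]
        gcongr
        exacts [hψ.lintegral_enorm_fourier_radialFn_sub_two_sq_le hα, le_rfl]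
    _ = ENNReal.ofReal (2 * centrifugalConst E ^ 2 / α ^ 4) * radialMass E ψ +
          2 * radialMass E χ := by
        rw [← mul_one_div (2 * _), ENNReal.ofReal_mul (by positivity),
          ENNReal.ofReal_mul two_pos.le, ENNReal.ofReal_ofNat]
        ring

end IsProfile

theorem IsCutoff.lintegral_enorm_sq_sub_sq_mul_fourier_packet_sq_le [Nontrivial E] {φ : ℝ → ℝ}
    {M δ N : ℝ} (hφ : IsCutoff φ M) (hδ : 8 ≤ δ) (hN : δ ≤ N) :
    ∫⁻ η : E, ‖(((2 * π * ‖η‖) ^ 2 - N ^ 2 : ℝ) : ℂ) *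
        𝓕 (radialFn (halfDensityExp E) (packet φ δ N) : E → ℂ) η‖ₑ ^ 2 ≤
      ENNReal.ofReal ((centrifugalConst E ^ 2 + 36 * M ^ 2) * N ^ 2 * δ ^ 2) *
        radialMass E (packet φ δ N) := by
  have hα : (0 : ℝ) < 3 / 8 := by norm_num
  have hψ := hφ.isProfile_packet hδ N
  have hmass : radialMass E (fun r => deriv (deriv (packet φ δ N)) r +
      (N ^ 2 : ℝ) * packet φ δ N r) ≤
      ENNReal.ofReal (18 * M ^ 2 * N ^ 2 * δ ^ 2) * radialMass E (packet φ δ N) := by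
    rw [(hψ.deriv_deriv_add N).radialMass_eq hα, hψ.radialMass_eq hα, mul_left_comm]
    gcongr
    exact hφ.lintegral_deriv_deriv_packet_add_le (by linarith) hN
  have hNδ : 2 / (3 / 8) ^ 4 ≤ N ^ 2 * δ ^ 2 := by
    rw [← mul_pow]
    exact (by norm_num : (2 : ℝ) / (3 / 8) ^ 4 ≤ (8 * 8) ^ 2).trans
      (pow_le_pow_left₀ (by norm_num) (mul_le_mul (hδ.trans hN) hδ (by norm_num) (by linarith)) 2)
  refine (hψ.lintegral_enorm_sq_sub_sq_mul_fourier_radialFn_sq_le hα N).trans ?_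
  calc _ ≤ ENNReal.ofReal (2 * centrifugalConst E ^ 2 / (3 / 8) ^ 4) *
            radialMass E (packet φ δ N) +
          2 * (ENNReal.ofReal (18 * M ^ 2 * N ^ 2 * δ ^ 2) * radialMass E (packet φ δ N)) := by
        gcongr
    _ = ENNReal.ofReal (2 * centrifugalConst E ^ 2 / (3 / 8) ^ 4 +
          2 * (18 * M ^ 2 * N ^ 2 * δ ^ 2)) * radialMass E (packet φ δ N) := by
        rw [ENNReal.ofReal_add (by positivity) (by positivity), ENNReal.ofReal_mul two_pos.le,
          ENNReal.ofReal_ofNat]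
        ring
    _ ≤ _ := by
        gcongr
        rw [mul_comm 2, mul_div_assoc]
        linarith [mul_le_mul_of_nonneg_left hNδ (sq_nonneg (centrifugalConst E))]

end FrequencyLocalisation

section Phase

variable {a N k t : ℝ}

theorem abs_rpow_sub_one_sub_le {x : ℝ} (ha : 0 < a) (ha1 : a < 1) (hx : 0 ≤ x) :
    |x ^ a - 1 - a * (x - 1)| ≤ (x - 1) ^ 2 := by
  have hbernoulli : ∀ b : ℝ, 0 < b → b < 1 → x ^ b ≤ 1 + b * (x - 1) := fun b hb hb1 => by
    simpa only [add_sub_cancel] using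
      rpow_one_add_le_one_add_mul_self (s := x - 1) (by linarith) hb.le hb1.le
  have hupper := hbernoulli a ha ha1
  have hconj := hbernoulli (1 - a) (by linarith) (by linarith)
  have hmul : x ^ a * x ^ (1 - a) = x := by
    rw [← rpow_add' hx (by norm_num), add_sub_cancel, rpow_one]
  have hpos : a ≤ 1 + (1 - a) * (x - 1) := by nlinarith
  -- Multiplying by the Bernoulli bound for `x ^ (1 - a)` turns the lower bound for `x ^ a` into a
  -- polynomial inequality.
  have hpoly : (1 + a * (x - 1) - (x - 1) ^ 2) * (1 + (1 - a) * (x - 1)) ≤ x := by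
    have hgap : 0 ≤ (x - 1) ^ 2 * (1 + (1 - a) * (x - 1) - a * (1 - a)) :=
      mul_nonneg (sq_nonneg _) (by nlinarith)
    nlinarith
  have hlower : 1 + a * (x - 1) - (x - 1) ^ 2 ≤ x ^ a := by
    refine le_of_mul_le_mul_right (hpoly.trans ?_) (ha.trans_le hpos)
    calc x = x ^ a * x ^ (1 - a) := hmul.symm
      _ ≤ x ^ a * (1 + (1 - a) * (x - 1)) := by gcongr
  rw [abs_of_nonpos (by linarith)]
  linarith

theorem norm_exp_I_mul_sub_exp_I_mul_sq_le (u v : ℝ) :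
    ‖Complex.exp (Complex.I * u) - Complex.exp (Complex.I * v)‖ ^ 2 ≤ 2 * |u - v| := by
  have htwo : ‖Complex.exp (Complex.I * u) - Complex.exp (Complex.I * v)‖ ≤ 2 := by
    refine (norm_sub_le _ _).trans_eq ?_
    rw [Complex.norm_exp_I_mul_ofReal, Complex.norm_exp_I_mul_ofReal, one_add_one_eq_two]
  have hlip : ‖Complex.exp (Complex.I * u) - Complex.exp (Complex.I * v)‖ ≤ |u - v| := by
    have hfactor : Complex.exp (Complex.I * u) - Complex.exp (Complex.I * v) =
        Complex.exp (Complex.I * v) * (Complex.exp (Complex.I * (u - v : ℝ)) - 1) := by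
      rw [mul_sub, ← Complex.exp_add, mul_one]
      push_cast
      ring_nf
    rw [hfactor, norm_mul, Complex.norm_exp_I_mul_ofReal, one_mul]
    exact norm_exp_I_mul_ofReal_sub_one_le
  rw [sq]
  gcongr

/-- The Fourier multiplier `e^{i (y k + t k ^ a)}`, at radial frequency `k`, of half-wave evolution
for time `y` followed by dispersive evolution for time `t`. -/
def wavePhase (a y t k : ℝ) : ℂ :=
  Complex.exp (Complex.I * ((y * k + t * k ^ a : ℝ) : ℂ))

/-- The derivative at `N` of the dispersion relation `k ↦ k ^ a`. -/
def groupVelocity (a N : ℝ) : ℝ := a * N ^ (a - 1)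

theorem norm_wavePhase (a y t k : ℝ) : ‖wavePhase a y t k‖ = 1 :=
  Complex.norm_exp_I_mul_ofReal _

theorem norm_wavePhase_mul (a y t k : ℝ) (w : ℂ) : ‖wavePhase a y t k * w‖ = ‖w‖ := by
  rw [norm_mul, norm_wavePhase, one_mul]

theorem continuous_wavePhase (ha : 0 < a) {X : Type*} [TopologicalSpace X] {y t k : X → ℝ}
    (hy : Continuous y) (ht : Continuous t) (hk : Continuous k) :
    Continuous fun x => wavePhase a (y x) (t x) (k x) := by
  have hpow : Continuous fun x => k x ^ a := hk.rpow_const fun _ => Or.inr ha.le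
  unfold wavePhase
  fun_prop

theorem continuous_wavePhase_norm {E : Type*} [NormedAddCommGroup E] (ha : 0 < a) (y t : ℝ) :
    Continuous fun η : E => wavePhase a y t (2 * π * ‖η‖) :=
  continuous_wavePhase ha continuous_const continuous_const (by fun_prop)

theorem wavePhase_sub_add_wavePhase_neg_sub (a z y t k : ℝ) :
    wavePhase a (z - y) t k + wavePhase a (-z - y) t k =
      (cos (k * z) : ℝ) * 2 * wavePhase a (-y) t k := by
  rw [Complex.ofReal_cos, mul_comm (Complex.cos _), Complex.two_cos, add_mul, wavePhase, wavePhase,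
    wavePhase, ← Complex.exp_add, ← Complex.exp_add]
  push_cast
  ring_nf

theorem norm_wavePhase_sub_sq_le (ha : 0 < a) (ha1 : a < 1) (hN : 0 < N) (hk : 0 ≤ k)
    (ht : |t| ≤ 1) :
    ‖wavePhase a (-(groupVelocity a N * t)) t k - wavePhase a (-(groupVelocity a N * t)) t N‖ ^ 2 ≤
      2 * (N ^ (a - 4) * (k ^ 2 - N ^ 2) ^ 2) := by
  have htaylor : -(groupVelocity a N * t) * k + t * k ^ a -
      (-(groupVelocity a N * t) * N + t * N ^ a) =
        t * (N ^ a * ((k / N) ^ a - 1 - a * (k / N - 1))) := by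
    rw [groupVelocity, rpow_sub_one hN.ne', div_rpow hk hN.le]
    field_simp
    ring
  have hpow : N ^ (a - 4) = N ^ a / N ^ 4 := by
    rw [rpow_sub hN]
    norm_cast
  have hquot : (k / N - 1) ^ 2 ≤ (k ^ 2 - N ^ 2) ^ 2 / N ^ 4 := by
    have hfactor : (k ^ 2 - N ^ 2) ^ 2 / N ^ 4 = (k / N - 1) ^ 2 * (k / N + 1) ^ 2 := by
      field_simp
      ring
    rw [hfactor]
    exact le_mul_of_one_le_right (sq_nonneg _) (one_le_pow₀ (by linarith [div_nonneg hk hN.le]))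
  refine (norm_exp_I_mul_sub_exp_I_mul_sq_le _ _).trans ?_
  rw [htaylor, abs_mul, abs_mul, abs_of_pos (rpow_pos_of_pos hN a), hpow]
  calc 2 * (|t| * (N ^ a * |(k / N) ^ a - 1 - a * (k / N - 1)|)) ≤
        2 * (1 * (N ^ a * ((k ^ 2 - N ^ 2) ^ 2 / N ^ 4))) := by
        gcongr
        exact (abs_rpow_sub_one_sub_le ha ha1 (div_nonneg hk hN.le)).trans hquot
    _ = 2 * (N ^ a / N ^ 4 * (k ^ 2 - N ^ 2) ^ 2) := by ring

end Phase

section WaveEvolution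

variable {E : Type*} [NormedAddCommGroup E] [InnerProductSpace ℝ E] [FiniteDimensional ℝ E]
  [MeasurableSpace E] [BorelSpace E] {a N t z : ℝ} {F G : E → ℂ}

theorem fourierInv_add_apply (hF : Integrable F) (hG : Integrable G) (x : E) :
    𝓕⁻ (fun η => F η + G η) x = 𝓕⁻ F x + 𝓕⁻ G x := by
  simp only [fourierInv_eq_fourier_neg, fourier_eq, smul_add]
  exact integral_add ((fourierIntegral_convergent_iff _).2 hF)
    ((fourierIntegral_convergent_iff _).2 hG)

theorem fourierInv_const_mul_apply (c : ℂ) (F : E → ℂ) (x : E) :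
    𝓕⁻ (fun η => c * F η) x = c * 𝓕⁻ F x := by
  simp only [fourierInv_eq_fourier_neg, fourier_eq, ← smul_eq_mul, smul_comm _ c]
  exact integral_smul c _

/-- The half-wave evolution at time `y`, followed by the dispersive evolution at time `t`, of the
function with Fourier transform `F`. In the normalisation `𝓕` of the Fourier transform the radial
frequency of `η` is `2 * π * ‖η‖`. -/
def waveEvol (a : ℝ) (F : E → ℂ) (y t : ℝ) (x : E) : ℂ :=
  𝓕⁻ (fun η => wavePhase a y t (2 * π * ‖η‖) * F η) x

theorem integrable_wavePhase_mul (ha : 0 < a) (hF : Integrable F) (y t : ℝ) :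
    Integrable fun η => wavePhase a y t (2 * π * ‖η‖) * F η :=
  hF.mono ((continuous_wavePhase_norm ha y t).aestronglyMeasurable.mul hF.1)
    (.of_forall fun _ => (norm_wavePhase_mul ..).le)

theorem memLp_wavePhase_mul (ha : 0 < a) {p : ENNReal} (hF : MemLp F p) (y t : ℝ) :
    MemLp (fun η => wavePhase a y t (2 * π * ‖η‖) * F η) p :=
  hF.of_le ((continuous_wavePhase_norm ha y t).aestronglyMeasurable.mul hF.1)
    (.of_forall fun _ => (norm_wavePhase_mul ..).le)

theorem norm_waveEvol_le (a : ℝ) (F : E → ℂ) (y t : ℝ) (x : E) :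
    ‖waveEvol a F y t x‖ ≤ ∫ η, ‖F η‖ := by
  rw [waveEvol, fourierInv_eq]
  refine (norm_integral_le_integral_norm _).trans_eq ?_
  simp only [Circle.norm_smul, norm_wavePhase_mul]

theorem continuous_waveEvol (ha : 0 < a) (hF : Integrable F) :
    Continuous fun w : (ℝ × ℝ) × E => waveEvol a F w.1.1 w.1.2 w.2 := by
  simp only [waveEvol, fourierInv_eq, Circle.smul_def]
  refine continuous_of_dominated (bound := fun η => ‖F η‖) (fun w => ?_) (fun w => ?_) hF.norm ?_
  · have hchar : Continuous fun v : E => (fourierChar ⟪v, w.2⟫_ℝ : ℂ) := by fun_prop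
    exact hchar.aestronglyMeasurable.smul (integrable_wavePhase_mul ha hF _ _).1
  · refine .of_forall fun η => ?_
    rw [norm_smul, Circle.norm_coe, one_mul, norm_wavePhase_mul]
  · refine .of_forall fun η => ?_
    have hchar : Continuous fun w : (ℝ × ℝ) × E => (fourierChar ⟪η, w.2⟫_ℝ : ℂ) := by fun_prop
    exact hchar.smul ((continuous_wavePhase ha (by fun_prop) (by fun_prop) continuous_const).mul
      continuous_const)

theorem lintegral_enorm_waveEvol_add_waveEvol_sub_sq (ha : 0 < a) (hF : Integrable F)
    (hF₂ : MemLp F 2) (hG : Integrable G) (hG₂ : MemLp G 2) (y₁ y₂ t : ℝ) (w : ℂ) :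
    ∫⁻ x, ‖waveEvol a F y₁ t x + waveEvol a F y₂ t x - w * 𝓕⁻ G x‖ₑ ^ 2 =
      ∫⁻ η, ‖(wavePhase a y₁ t (2 * π * ‖η‖) + wavePhase a y₂ t (2 * π * ‖η‖)) * F η -
        w * G η‖ₑ ^ 2 := by
  have h₁ := integrable_wavePhase_mul ha hF y₁ t
  have h₂ := integrable_wavePhase_mul ha hF y₂ t
  have hG' : Integrable fun η => -w * G η := hG.const_mul _
  have h₁₂ : Integrable fun η => wavePhase a y₁ t (2 * π * ‖η‖) * F η +
      wavePhase a y₂ t (2 * π * ‖η‖) * F η := h₁.add h₂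
  have hlinear : ∀ x, waveEvol a F y₁ t x + waveEvol a F y₂ t x - w * 𝓕⁻ G x =
      𝓕⁻ (fun η => wavePhase a y₁ t (2 * π * ‖η‖) * F η + wavePhase a y₂ t (2 * π * ‖η‖) * F η +
        -w * G η) x := fun x => by
    rw [fourierInv_add_apply h₁₂ hG', fourierInv_add_apply h₁ h₂,
      fourierInv_const_mul_apply, neg_mul, ← sub_eq_add_neg, waveEvol, waveEvol]
  simp only [hlinear]
  refine (lintegral_enorm_fourierInv_sq (h₁₂.add hG')
    (((memLp_wavePhase_mul ha hF₂ y₁ t).add (memLp_wavePhase_mul ha hF₂ y₂ t)).add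
      (hG₂.const_mul _))).trans ?_
  simp only [Pi.add_apply, add_mul, neg_mul, sub_eq_add_neg]

theorem enorm_wavePhase_add_mul_sub_sq_le (ha : 0 < a) (ha1 : a < 1) (hN : 0 < N) (ht : |t| ≤ 1)
    {k : ℝ} (hk : 0 ≤ k) (z : ℝ) (u v : ℂ) :
    ‖(wavePhase a (z - groupVelocity a N * t) t k + wavePhase a (-z - groupVelocity a N * t) t k) *
        u - wavePhase a (-(groupVelocity a N * t)) t N * v‖ₑ ^ 2 ≤
      2 * (ENNReal.ofReal (8 * N ^ (a - 4)) * ‖((k ^ 2 - N ^ 2 : ℝ) : ℂ) * u‖ₑ ^ 2) +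
        2 * ‖v - (cos (k * z) : ℝ) * (2 * u)‖ₑ ^ 2 := by
  set w := wavePhase a (-(groupVelocity a N * t)) t N
  have hphase : ‖wavePhase a (-(groupVelocity a N * t)) t k - w‖ ^ 2 ≤
      2 * (N ^ (a - 4) * (k ^ 2 - N ^ 2) ^ 2) := norm_wavePhase_sub_sq_le ha ha1 hN hk ht
  have hsplit : (wavePhase a (z - groupVelocity a N * t) t k +
      wavePhase a (-z - groupVelocity a N * t) t k) * u - w * v =
        (cos (k * z) : ℝ) * 2 * (wavePhase a (-(groupVelocity a N * t)) t k - w) * u +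
          -(w * (v - (cos (k * z) : ℝ) * (2 * u))) := by
    rw [wavePhase_sub_add_wavePhase_neg_sub]
    ring
  rw [hsplit]
  refine (enorm_add_sq_le _ _).trans ?_
  gcongr ?_ + ?_
  · simp only [← ofReal_norm]
    rw [← ENNReal.ofReal_pow (norm_nonneg _), ← ENNReal.ofReal_pow (norm_nonneg _),
      ← ENNReal.ofReal_mul (by positivity)]
    gcongr
    simp only [norm_mul, Complex.norm_real, norm_eq_abs, mul_pow, sq_abs, Complex.norm_ofNat]
    calc _ ≤ 1 * 2 ^ 2 * (2 * (N ^ (a - 4) * (k ^ 2 - N ^ 2) ^ 2)) * ‖u‖ ^ 2 := by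
          gcongr
          exact cos_sq_le_one _
      _ = 8 * N ^ (a - 4) * ((k ^ 2 - N ^ 2) ^ 2 * ‖u‖ ^ 2) := by ring
  · rw [enorm_neg, enorm_mul, ← ofReal_norm w, norm_wavePhase, ENNReal.ofReal_one, one_mul]

theorem lintegral_enorm_waveEvol_sub_fourierInv_sq_le (ha : 0 < a) (ha1 : a < 1) (hN : 0 < N)
    (ht : |t| ≤ 1) (hF : Integrable F) (hF₂ : MemLp F 2) (hFm : Measurable F) (hG : Integrable G)
    (hG₂ : MemLp G 2) (z : ℝ) :
    ∫⁻ x, ‖waveEvol a F (z - groupVelocity a N * t) t x +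
        waveEvol a F (-z - groupVelocity a N * t) t x -
        wavePhase a (-(groupVelocity a N * t)) t N * 𝓕⁻ G x‖ₑ ^ 2 ≤
      ENNReal.ofReal (16 * N ^ (a - 4)) *
        (∫⁻ η, ‖(((2 * π * ‖η‖) ^ 2 - N ^ 2 : ℝ) : ℂ) * F η‖ₑ ^ 2) +
      2 * ∫⁻ η, ‖G η - (cos (2 * π * ‖η‖ * z) : ℝ) * (2 * F η)‖ₑ ^ 2 := by
  rw [lintegral_enorm_waveEvol_add_waveEvol_sub_sq ha hF hF₂ hG hG₂]
  refine (lintegral_mono fun η => enorm_wavePhase_add_mul_sub_sq_le ha ha1 hN ht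
    (by positivity : 0 ≤ 2 * π * ‖η‖) z (F η) (G η)).trans_eq ?_
  rw [lintegral_add_left (by fun_prop), lintegral_const_mul' _ _ (by simp),
    lintegral_const_mul' _ _ ENNReal.ofReal_ne_top, lintegral_const_mul' _ _ (by simp), ← mul_assoc,
    ← ENNReal.ofReal_ofNat, ← ENNReal.ofReal_mul two_pos.le, ← mul_assoc]
  norm_num

end WaveEvolution

section TravellingShells

variable {E : Type*} [NormedAddCommGroup E] [InnerProductSpace ℝ E] [FiniteDimensional ℝ E]
  [MeasurableSpace E] [BorelSpace E]

namespace IsProfile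

variable {α β z : ℝ} {ψ : ℝ → ℂ}

theorem memLp_radialFn (hα : 0 < α) (hψ : IsProfile α β ψ) (q : ℝ) :
    MemLp (radialFn q ψ : E → ℂ) 2 := by
  rw [← hψ.coe_toSchwartz_rpow_mul hα]
  exact SchwartzMap.memLp _ 2 volume

theorem radialMass_ne_top (hα : 0 < α) (hψ : IsProfile α β ψ) : radialMass E ψ ≠ ⊤ := by
  have hint := ((hψ.memLp_radialFn (E := E) hα (halfDensityExp E)).integrable_norm_pow
    two_ne_zero).2
  simp only [HasFiniteIntegral, enorm_pow, enorm_norm] at hint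
  exact hint.ne

theorem integrable_fourier_radialFn (hα : 0 < α) (hψ : IsProfile α β ψ) (q : ℝ) :
    Integrable (𝓕 (radialFn q ψ : E → ℂ)) := by
  rw [← hψ.coe_toSchwartz_rpow_mul hα, ← SchwartzMap.fourier_coe]
  exact SchwartzMap.integrable _

theorem memLp_fourier_radialFn (hα : 0 < α) (hψ : IsProfile α β ψ) (q : ℝ) :
    MemLp (𝓕 (radialFn q ψ : E → ℂ)) 2 := by
  rw [← hψ.coe_toSchwartz_rpow_mul hα, ← SchwartzMap.fourier_coe]
  exact SchwartzMap.memLp _ 2 volume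

theorem fourierInv_fourier_radialFn (hα : 0 < α) (hψ : IsProfile α β ψ) (q : ℝ) (x : E) :
    𝓕⁻ (𝓕 (radialFn q ψ : E → ℂ)) x = radialFn q ψ x := by
  rw [← hψ.coe_toSchwartz_rpow_mul hα, ← SchwartzMap.fourier_coe, ← SchwartzMap.fourierInv_coe,
    FourierTransform.fourierInv_fourier_eq]

theorem integrable_standingWave (hψ : IsProfile α β ψ) (hz : |z| < α) (q : ℝ) :
    Integrable (standingWave q ψ z : E → ℂ) :=
  ((hψ.comp_sub_const z).integrable_fourier_radialFn (by linarith [neg_abs_le z]) q).add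
    ((hψ.comp_sub_const (-z)).integrable_fourier_radialFn (by linarith [le_abs_self z]) q)

theorem memLp_standingWave (hψ : IsProfile α β ψ) (hz : |z| < α) (q : ℝ) :
    MemLp (standingWave q ψ z : E → ℂ) 2 :=
  ((hψ.comp_sub_const z).memLp_fourier_radialFn (by linarith [neg_abs_le z]) q).add
    ((hψ.comp_sub_const (-z)).memLp_fourier_radialFn (by linarith [le_abs_self z]) q)

theorem fourierInv_standingWave (hψ : IsProfile α β ψ) (hz : |z| < α) (q : ℝ) (x : E) :
    𝓕⁻ (standingWave q ψ z : E → ℂ) x =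
      radialFn q (fun r => ψ (r - z)) x + radialFn q (fun r => ψ (r - -z)) x := by
  have hz₁ : 0 < α + z := by linarith [neg_abs_le z]
  have hz₂ : 0 < α + -z := by linarith [le_abs_self z]
  rw [← (hψ.comp_sub_const z).fourierInv_fourier_radialFn hz₁,
    ← (hψ.comp_sub_const (-z)).fourierInv_fourier_radialFn hz₂]
  exact fourierInv_add_apply ((hψ.comp_sub_const z).integrable_fourier_radialFn hz₁ q)
    ((hψ.comp_sub_const (-z)).integrable_fourier_radialFn hz₂ q) x

end IsProfile

variable (E) in
/-- A bound for the relative squared `L²(E)` error made when an evolved wave packet of frequency `N`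
and width `1 / δ` is replaced by two packets displaced by `z`. -/
def packetError (a M δ N z : ℝ) : ℝ :=
  16 * (centrifugalConst E ^ 2 + 36 * M ^ 2) * (N ^ (a - 2) * δ ^ 2) +
    2048 * centrifugalConst E ^ 2 * z ^ 4

variable (E) in
/-- The Fourier transform of the radial test function on `E` with profile `packet φ δ N`. -/
def packetHat (φ : ℝ → ℝ) (δ N : ℝ) : E → ℂ :=
  𝓕 (radialFn (halfDensityExp E) (packet φ δ N) : E → ℂ)

variable {φ : ℝ → ℝ} {a M δ N z t : ℝ}

theorem IsCutoff.integrable_packetHat (hφ : IsCutoff φ M) (hδ : 8 ≤ δ) (N : ℝ) :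
    Integrable (packetHat E φ δ N) :=
  (hφ.isProfile_packet hδ N).integrable_fourier_radialFn (by norm_num) _

theorem IsCutoff.measurable_packetHat (hφ : IsCutoff φ M) (hδ : 8 ≤ δ) (N : ℝ) :
    Measurable (packetHat E φ δ N) :=
  ((hφ.isProfile_packet hδ N).continuous_fourier_radialFn (by norm_num) _).measurable

theorem IsCutoff.lintegral_enorm_waveEvol_packet_sub_sq_le [Nontrivial E] (hφ : IsCutoff φ M)
    (hδ : 8 ≤ δ) (hN : δ ≤ N) (ha : 0 < a) (ha1 : a < 1) (hz : 0 ≤ z) (hz8 : z < 1 / 8)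
    (ht : |t| ≤ 1) :
    ∫⁻ x : E, ‖waveEvol a (packetHat E φ δ N) (z - groupVelocity a N * t) t x +
        waveEvol a (packetHat E φ δ N) (-z - groupVelocity a N * t) t x -
        wavePhase a (-(groupVelocity a N * t)) t N *
          𝓕⁻ (standingWave (halfDensityExp E) (packet φ δ N) z : E → ℂ) x‖ₑ ^ 2 ≤
      ENNReal.ofReal (packetError E a M δ N z) * radialMass E (packet φ δ N) := by
  have hα : (0 : ℝ) < 3 / 8 := by norm_num
  have hN0 : 0 < N := by linarith
  have hzα : |z| < 3 / 8 := by
    rw [abs_of_nonneg hz]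
    linarith
  have hψ := hφ.isProfile_packet hδ N
  have hpow : N ^ (a - 2) = N ^ (a - 4) * N ^ 2 := by
    rw [← rpow_two, ← rpow_add hN0]
    ring_nf
  have hcurv : 4 * centrifugalConst E ^ 2 * z ^ 4 / (3 / 8 - z) ^ 4 ≤
      4 * centrifugalConst E ^ 2 * z ^ 4 / (1 / 4) ^ 4 := by
    gcongr
    linarith
  refine (lintegral_enorm_waveEvol_sub_fourierInv_sq_le ha ha1 hN0 ht
    (hφ.integrable_packetHat hδ N) (hψ.memLp_fourier_radialFn hα _)
    (hφ.measurable_packetHat hδ N) (hψ.integrable_standingWave hzα _)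
    (hψ.memLp_standingWave hzα _) z).trans ?_
  calc _ ≤ ENNReal.ofReal (16 * N ^ (a - 4)) *
            (ENNReal.ofReal ((centrifugalConst E ^ 2 + 36 * M ^ 2) * N ^ 2 * δ ^ 2) *
              radialMass E (packet φ δ N)) +
          2 * (ENNReal.ofReal (4 * centrifugalConst E ^ 2 * z ^ 4 / (1 / 4) ^ 4) *
            radialMass E (packet φ δ N)) := by
        gcongr
        · exact hφ.lintegral_enorm_sq_sub_sq_mul_fourier_packet_sq_le hδ hN
        · refine (hψ.lintegral_enorm_standingWave_sub_cos_mul_sq_le hz (by linarith)).trans ?_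
          gcongr
    _ = ENNReal.ofReal (packetError E a M δ N z) * radialMass E (packet φ δ N) := by
        rw [← mul_assoc, ← mul_assoc, ← ENNReal.ofReal_ofNat 2,
          ← ENNReal.ofReal_mul (by positivity), ← ENNReal.ofReal_mul two_pos.le, ← add_mul,
          ← ENNReal.ofReal_add (by positivity) (by positivity), packetError, hpow]
        congr 2
        ring

/-- The annulus of radius `1 / 2 + ρ` and thickness `2 / δ`. -/
def shell (E : Type*) [NormedAddCommGroup E] (δ ρ : ℝ) : Set E :=
  {x | |‖x‖ - 1 / 2 - ρ| < 1 / δ}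

theorem measurableSet_shell (E : Type*) [NormedAddCommGroup E] [MeasurableSpace E] [BorelSpace E]
    (δ ρ : ℝ) : MeasurableSet (shell E δ ρ) :=
  (isOpen_lt (by fun_prop) continuous_const).measurableSet

theorem lintegral_enorm_sq_le_of_sub {X : Type*} [MeasurableSpace X] {μ : Measure X} {g V : X → ℂ}
    (hV : Measurable V) (hg : ∫⁻ x, ‖g x‖ₑ ^ 2 ∂μ ≠ ⊤)
    (herr : ∫⁻ x, ‖V x - g x‖ₑ ^ 2 ∂μ ≤ (∫⁻ x, ‖g x‖ₑ ^ 2 ∂μ) / 4) :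
    ∫⁻ x, ‖g x‖ₑ ^ 2 ∂μ ≤ 4 * ∫⁻ x, ‖V x‖ₑ ^ 2 ∂μ := by
  set m := ∫⁻ x, ‖g x‖ₑ ^ 2 ∂μ
  have hsplit : m ≤ 2 * ∫⁻ x, ‖V x‖ₑ ^ 2 ∂μ + m / 2 := by
    calc m = ∫⁻ x, ‖V x + -(V x - g x)‖ₑ ^ 2 ∂μ := by simp only [neg_sub, add_sub_cancel, m]
      _ ≤ 2 * ∫⁻ x, ‖V x‖ₑ ^ 2 ∂μ + 2 * ∫⁻ x, ‖-(V x - g x)‖ₑ ^ 2 ∂μ :=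
          lintegral_enorm_add_sq_le hV _
      _ ≤ 2 * ∫⁻ x, ‖V x‖ₑ ^ 2 ∂μ + 2 * (m / 4) := by
          simp only [enorm_neg]
          gcongr
      _ = 2 * ∫⁻ x, ‖V x‖ₑ ^ 2 ∂μ + m / 2 := by
          rw [show (4 : ENNReal) = 2 * 2 by norm_num, ← mul_div_assoc,
            ENNReal.mul_div_mul_left _ _ (by simp) (by simp)]
  have hhalf : m / 2 ≤ 2 * ∫⁻ x, ‖V x‖ₑ ^ 2 ∂μ := by
    refine (ENNReal.add_le_add_iff_right (ENNReal.div_ne_top hg two_ne_zero)).1 ?_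
    rwa [ENNReal.add_halves]
  calc m = 2 * (m / 2) := (ENNReal.mul_div_cancel (by simp) (by simp)).symm
    _ ≤ 2 * (2 * ∫⁻ x, ‖V x‖ₑ ^ 2 ∂μ) := by gcongr
    _ = 4 * ∫⁻ x, ‖V x‖ₑ ^ 2 ∂μ := by
        rw [← mul_assoc]
        norm_num

theorem IsCutoff.setLIntegral_shell_radialFn_packet [Nontrivial E] (hφ : IsCutoff φ M)
    (hδ : 8 ≤ δ) (hz : 0 ≤ z) :
    ∫⁻ x in shell E δ z, ‖radialFn (halfDensityExp E) (fun r => packet φ δ N (r - z)) x‖ₑ ^ 2 =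
      radialMass E (packet φ δ N) := by
  rw [← (hφ.isProfile_packet hδ N).radialMass_comp_sub_const (by norm_num)
    (by linarith : 0 < 3 / 8 + z), radialMass]
  refine setLIntegral_eq_of_support_subset fun x hx => ?_
  by_contra hshell
  have hpacket : packet φ δ N (‖x‖ - z) = 0 := hφ.packet_eq_zero (by linarith) <| by
    rw [sub_right_comm]
    exact not_lt.1 hshell
  simp [radialFn, hpacket] at hx

theorem IsCutoff.fourierInv_standingWave_packet_of_mem_shell (hφ : IsCutoff φ M)
    (hδ : 8 ≤ δ) (hz : 1 / δ ≤ z) (hz8 : z < 1 / 8) {x : E} (hx : x ∈ shell E δ z) :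
    𝓕⁻ (standingWave (halfDensityExp E) (packet φ δ N) z : E → ℂ) x =
      radialFn (halfDensityExp E) (fun r => packet φ δ N (r - z)) x := by
  have hz0 : 0 ≤ z := le_trans (by positivity) hz
  have hx' : |‖x‖ - 1 / 2 - z| < 1 / δ := hx
  rw [(hφ.isProfile_packet hδ N).fourierInv_standingWave
    (by rw [abs_of_nonneg hz0]; linarith), add_eq_left, radialFn,
    hφ.packet_eq_zero (by linarith), mul_zero]
  exact le_trans (by linarith [(abs_lt.1 hx').1]) (le_abs_self _)

theorem measurable_waveEvol (ha : 0 < a) {F : E → ℂ} (hF : Integrable F) (y t : ℝ) :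
    Measurable (waveEvol a F y t) :=
  ((continuous_waveEvol ha hF).comp
    (by fun_prop : Continuous fun x : E => ((y, t), x))).measurable

/-- The mass of the evolution on the shell of radius `1 / 2 + |w|`, at the half-wave time
`w - v * t` that compensates the motion of a packet with velocity `v`. -/
def travellingMass (a δ v : ℝ) (F : E → ℂ) (t w : ℝ) : ENNReal :=
  ∫⁻ x in shell E δ |w|, ‖waveEvol a F (w - v * t) t x‖ₑ ^ 2

theorem IsCutoff.radialMass_le_travellingMass [Nontrivial E] (hφ : IsCutoff φ M) (hδ : 8 ≤ δ)
    (hN : δ ≤ N) (ha : 0 < a) (ha1 : a < 1) (hz : 1 / δ ≤ z) (hz8 : z < 1 / 8) (ht : |t| ≤ 1)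
    (herr : packetError E a M δ N z ≤ 1 / 4) :
    radialMass E (packet φ δ N) ≤
      8 * (travellingMass a δ (groupVelocity a N) (packetHat E φ δ N) t z +
        travellingMass a δ (groupVelocity a N) (packetHat E φ δ N) t (-z)) := by
  have hα : (0 : ℝ) < 3 / 8 := by norm_num
  have hz0 : 0 ≤ z := le_trans (by positivity) hz
  have hψ := hφ.isProfile_packet hδ N
  have hF := hφ.integrable_packetHat (E := E) hδ N
  have htotal := hφ.lintegral_enorm_waveEvol_packet_sub_sq_le (E := E) hδ hN ha ha1 hz0 hz8 ht
  set m := radialMass E (packet φ δ N)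
  set U₁ := waveEvol a (packetHat E φ δ N) (z - groupVelocity a N * t) t
  set U₂ := waveEvol a (packetHat E φ δ N) (-z - groupVelocity a N * t) t
  set w := wavePhase a (-(groupVelocity a N * t)) t N
  set g := fun x : E => w * 𝓕⁻ (standingWave (halfDensityExp E) (packet φ δ N) z : E → ℂ) x
  have hU₁ : Measurable U₁ := measurable_waveEvol ha hF _ _
  have hU₂ : Measurable U₂ := measurable_waveEvol ha hF _ _
  have hg : ∫⁻ x in shell E δ z, ‖g x‖ₑ ^ 2 = m := by
    refine (setLIntegral_congr_fun (measurableSet_shell E δ z) fun x hx => ?_).trans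
      (hφ.setLIntegral_shell_radialFn_packet hδ hz0)
    simp only [g, hφ.fourierInv_standingWave_packet_of_mem_shell hδ hz hz8 hx]
    rw [← ofReal_norm, norm_wavePhase_mul, ofReal_norm]
  have hlocal : ∫⁻ x in shell E δ z, ‖(U₁ x + U₂ x) - g x‖ₑ ^ 2 ≤ m / 4 := by
    refine (setLIntegral_le_lintegral _ _).trans (htotal.trans ?_)
    rw [div_eq_mul_inv, mul_comm m, ← ENNReal.ofReal_ofNat 4,
      ← ENNReal.ofReal_inv_of_pos (by norm_num), ← one_div]
    gcongr
  rw [travellingMass, travellingMass, abs_neg, abs_of_nonneg hz0]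
  calc m ≤ 4 * ∫⁻ x in shell E δ z, ‖U₁ x + U₂ x‖ₑ ^ 2 := by
        rw [← hg] at hlocal ⊢
        exact lintegral_enorm_sq_le_of_sub (hU₁.add hU₂) (hg ▸ hψ.radialMass_ne_top hα) hlocal
    _ ≤ 4 * (2 * (∫⁻ x in shell E δ z, ‖U₁ x‖ₑ ^ 2) + 2 * ∫⁻ x in shell E δ z, ‖U₂ x‖ₑ ^ 2) := by
        gcongr
        exact lintegral_enorm_add_sq_le hU₁ _
    _ = 8 * ((∫⁻ x in shell E δ z, ‖U₁ x‖ₑ ^ 2) + ∫⁻ x in shell E δ z, ‖U₂ x‖ₑ ^ 2) := by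
        ring

end TravellingShells

section Windows

/-- The positions `w` of size between `c` and `2 * c`. Both signs are kept because either of the two
packets at `±w` may carry the mass. -/
def window (c : ℝ) : Set ℝ :=
  {w | c < |w| ∧ |w| < 2 * c}

theorem measurableSet_window (c : ℝ) : MeasurableSet (window c) :=
  ((isOpen_lt continuous_const continuous_abs).inter
    (isOpen_lt continuous_abs continuous_const)).measurableSet

theorem abs_sub_le_of_mem_window {c u v : ℝ} (hu : u ∈ window c) (hv : v ∈ window c)
    (huv : |u - v| ≤ 2 * c) : |u - v| ≤ |(|u| - |v|)| := by
  obtain ⟨hu₁, hu₂⟩ := hu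
  obtain ⟨hv₁, hv₂⟩ := hv
  rcases le_total 0 u with h | h <;> rcases le_total 0 v with h' | h' <;>
    simp only [abs_of_nonneg, abs_of_nonpos, h, h'] at hu₁ hu₂ hv₁ hv₂ ⊢
  · exact le_rfl
  · linarith [le_abs_self (u - v)]
  · linarith [neg_abs_le (u - v)]
  · rw [abs_sub_comm, neg_sub_neg, abs_sub_comm]

theorem ofReal_mul_le_lintegral_window {c : ℝ} (hc : 0 ≤ c) {m : ENNReal} {P : ℝ → ENNReal}
    (hP : Measurable P) (hm : ∀ z ∈ Set.Ioo c (2 * c), m ≤ 8 * (P z + P (-z))) :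
    ENNReal.ofReal c * m ≤ 16 * ∫⁻ w, (window c).indicator P w := by
  set Q := (window c).indicator P
  have hQ : Measurable Q := hP.indicator (measurableSet_window c)
  have hPQ : ∀ w, |w| ∈ Set.Ioo c (2 * c) → P w = Q w := fun w hw =>
    (Set.indicator_of_mem (s := window c) hw P).symm
  calc ENNReal.ofReal c * m = ∫⁻ _ in Set.Ioo c (2 * c), m := by
        rw [setLIntegral_const, Real.volume_Ioo, mul_comm]
        congr 2
        ring
    _ ≤ ∫⁻ z in Set.Ioo c (2 * c), 8 * (Q z + Q (-z)) := by
        refine setLIntegral_mono' measurableSet_Ioo fun z hz => ?_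
        have hz' : |z| ∈ Set.Ioo c (2 * c) := by rwa [abs_of_nonneg (hc.trans hz.1.le)]
        rw [← hPQ z hz', ← hPQ (-z) (by rwa [abs_neg])]
        exact hm z hz
    _ ≤ ∫⁻ z, 8 * (Q z + Q (-z)) := setLIntegral_le_lintegral _ _
    _ = 8 * ((∫⁻ z, Q z) + ∫⁻ z, Q (-z)) := by
        rw [lintegral_const_mul' _ _ (by simp), lintegral_add_left hQ]
    _ = 16 * ∫⁻ z, Q z := by
        rw [lintegral_neg_eq_self, ← two_mul, ← mul_assoc]
        norm_num

theorem natCast_div_mem_Ico {j J : ℕ} (hj : j < J) : (j / J : ℝ) ∈ Set.Ico (0 : ℝ) 1 := by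
  have hJ : (j : ℝ) < J := by exact_mod_cast hj
  exact ⟨by positivity, (div_lt_one (by linarith [Nat.cast_nonneg (α := ℝ) j])).2 hJ⟩

theorem div_le_abs_abs_sub_abs {c v y : ℝ} (hv0 : 0 < v) (hv : v ≤ 2 * c) {i j J : ℕ}
    (hi : i < J) (hj : j < J) (hij : i ≠ j) (hwi : y + v * (i / J) ∈ window c)
    (hwj : y + v * (j / J) ∈ window c) :
    v / J ≤ |(|y + v * (i / J)| - |y + v * (j / J)|)| := by
  obtain ⟨hi₀, hi₁⟩ := natCast_div_mem_Ico hi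
  obtain ⟨hj₀, hj₁⟩ := natCast_div_mem_Ico hj
  have hdist : |y + v * (i / J) - (y + v * (j / J))| = v * |(i / J - j / J : ℝ)| := by
    rw [add_sub_add_left_eq_sub, ← mul_sub, abs_mul, abs_of_pos hv0]
  have hle : |(i / J - j / J : ℝ)| ≤ 1 := abs_le.2 ⟨by linarith, by linarith⟩
  have hgap : 1 ≤ |(i : ℝ) - j| := by
    have hint : (1 : ℤ) ≤ |(i : ℤ) - j| := Int.one_le_abs (by omega)
    exact_mod_cast hint
  calc v / J ≤ v / J * |(i : ℝ) - j| := le_mul_of_one_le_right (by positivity) hgap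
    _ = |y + v * (i / J) - (y + v * (j / J))| := by
        rw [hdist, ← sub_div, abs_div, Nat.abs_cast]
        ring
    _ ≤ _ := abs_sub_le_of_mem_window hwi hwj <| by
        rw [hdist]
        exact (mul_le_of_le_one_right hv0.le hle).trans hv

end Windows

section Summation

variable {E : Type*} [NormedAddCommGroup E]

theorem disjoint_shell {δ ρ ρ' : ℝ} (h : 2 / δ ≤ |ρ - ρ'|) :
    Disjoint (shell E δ ρ) (shell E δ ρ') := by
  refine Set.disjoint_left.2 fun x hx hx' => h.not_gt ?_
  have hx : |‖x‖ - 1 / 2 - ρ| < 1 / δ := hx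
  have hx' : |‖x‖ - 1 / 2 - ρ'| < 1 / δ := hx'
  calc |ρ - ρ'| = |‖x‖ - 1 / 2 - ρ' - (‖x‖ - 1 / 2 - ρ)| := by
        congr 1
        ring
    _ ≤ |‖x‖ - 1 / 2 - ρ'| + |‖x‖ - 1 / 2 - ρ| := abs_sub _ _
    _ < 1 / δ + 1 / δ := add_lt_add hx' hx
    _ = 2 / δ := by ring

theorem shell_subset_ball {δ ρ : ℝ} (h : 1 / 2 + ρ + 1 / δ ≤ 1) :
    shell E δ ρ ⊆ Metric.ball 0 1 := fun x hx => by
  have hx : |‖x‖ - 1 / 2 - ρ| < 1 / δ := hx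
  rw [mem_ball_zero_iff]
  linarith [(abs_lt.1 hx).2]

variable [InnerProductSpace ℝ E] [FiniteDimensional ℝ E] [MeasurableSpace E] [BorelSpace E]
  {a δ v c : ℝ} {F : E → ℂ} {G : ℝ → E → ENNReal} {J : ℕ}

theorem measurable_travellingMass (ha : 0 < a) (δ v : ℝ) (hF : Integrable F) (t : ℝ) :
    Measurable (travellingMass a δ v F t) := by
  have hS : MeasurableSet {q : ℝ × E | q.2 ∈ shell E δ |q.1|} :=
    (isOpen_lt (f := fun q : ℝ × E => |‖q.2‖ - 1 / 2 - (|q.1|)|) (by fun_prop)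
      continuous_const).measurableSet
  have hU : Measurable fun q : ℝ × E => ‖waveEvol a F (q.1 - v * t) t q.2‖ₑ ^ 2 :=
    (((continuous_waveEvol ha hF).comp (by fun_prop :
      Continuous fun q : ℝ × E => ((q.1 - v * t, t), q.2))).measurable.enorm).pow_const 2
  have hslice : travellingMass a δ v F t = fun w => ∫⁻ x,
      {q : ℝ × E | q.2 ∈ shell E δ |q.1|}.indicator
        (fun q => ‖waveEvol a F (q.1 - v * t) t q.2‖ₑ ^ 2) (w, x) := by
    funext w
    rw [travellingMass, ← lintegral_indicator (measurableSet_shell E δ |w|)]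
    rfl
  rw [hslice]
  exact (hU.indicator hS).lintegral_prod_right'

theorem sum_travellingMass_le (hδ : 8 ≤ δ) (hc : c ≤ 1 / 16) (hv0 : 0 < v) (hv : v ≤ 2 * c)
    (hgap : 2 / δ ≤ v / J)
    (hG : ∀ y x, ∀ t ∈ Set.Ico (0 : ℝ) 1, ‖waveEvol a F y t x‖ₑ ^ 2 ≤ G y x) (y : ℝ)
    {T : Finset ℕ} (hT : ∀ j ∈ T, j < J ∧ y + v * (j / J) ∈ window c) :
    ∑ j ∈ T, travellingMass a δ v F (j / J) (y + v * (j / J)) ≤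
      ∫⁻ x in Metric.ball (0 : E) 1, G y x := by
  have hdisj : (T : Set ℕ).PairwiseDisjoint fun j : ℕ => shell E δ |y + v * (j / J)| :=
    fun i hi j hj hij => disjoint_shell <| hgap.trans <|
      div_le_abs_abs_sub_abs hv0 hv (hT i hi).1 (hT j hj).1 hij (hT i hi).2 (hT j hj).2
  have hδ' : 1 / δ ≤ 1 / 8 := one_div_le_one_div_of_le (by norm_num) hδ
  calc _ ≤ ∑ j ∈ T, ∫⁻ x in shell E δ |y + v * (j / J)|, G y x := by
        refine Finset.sum_le_sum fun j hj => lintegral_mono fun x => ?_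
        rw [add_sub_cancel_right]
        exact hG y x _ (natCast_div_mem_Ico (hT j hj).1)
    _ = ∫⁻ x in ⋃ j ∈ T, shell E δ |y + v * (j / J)|, G y x :=
        (lintegral_biUnion_finset hdisj (fun j _ => measurableSet_shell E _ _) _).symm
    _ ≤ _ := lintegral_mono_set <| Set.iUnion₂_subset fun j hj => shell_subset_ball <| by
        linarith [(hT j hj).2.2]

theorem sum_indicator_travellingMass_le (hδ : 8 ≤ δ) (hc : c ≤ 1 / 16) (hv0 : 0 < v)
    (hv : v ≤ 2 * c) (hgap : 2 / δ ≤ v / J)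
    (hG : ∀ y x, ∀ t ∈ Set.Ico (0 : ℝ) 1, ‖waveEvol a F y t x‖ₑ ^ 2 ≤ G y x) (y : ℝ) :
    ∑ j ∈ Finset.range J,
        (window c).indicator (travellingMass a δ v F (j / J)) (y + v * (j / J)) ≤
      (Set.Ioo (-1 : ℝ) 1).indicator (fun y => ∫⁻ x in Metric.ball (0 : E) 1, G y x) y := by
  classical
  by_cases hy : y ∈ Set.Ioo (-1 : ℝ) 1
  · simp only [Set.indicator_of_mem hy, Set.indicator_apply (window c)]
    rw [← Finset.sum_filter]
    exact sum_travellingMass_le hδ hc hv0 hv hgap hG y fun j hj => by simpa using hj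
  · rw [Set.indicator_of_notMem hy]
    refine (Finset.sum_eq_zero fun j hj => Set.indicator_of_notMem (fun hw => hy ?_) _).le
    obtain ⟨ht₀, ht₁⟩ := natCast_div_mem_Ico (Finset.mem_range.1 hj)
    obtain ⟨hw₁, hw₂⟩ := abs_lt.1 hw.2
    have hvt₀ : 0 ≤ v * ((j : ℝ) / J) := mul_nonneg hv0.le ht₀
    have hvt₁ : v * ((j : ℝ) / J) ≤ v := mul_le_of_le_one_right hv0.le ht₁.le
    exact ⟨by linarith, by linarith⟩

theorem natCast_mul_le_lintegral_of_travellingMass (ha : 0 < a) (hδ : 8 ≤ δ) (hc : c ≤ 1 / 16)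
    (hv0 : 0 < v) (hv : v ≤ 2 * c) (hgap : 2 / δ ≤ v / J) (hF : Integrable F) {m : ENNReal}
    (hm : ∀ t ∈ Set.Ico (0 : ℝ) 1, ∀ z ∈ Set.Ioo c (2 * c),
      m ≤ 8 * (travellingMass a δ v F t z + travellingMass a δ v F t (-z)))
    (hG : ∀ y x, ∀ t ∈ Set.Ico (0 : ℝ) 1, ‖waveEvol a F y t x‖ₑ ^ 2 ≤ G y x) :
    J * (ENNReal.ofReal c * m) ≤
      16 * ∫⁻ y in Set.Ioo (-1 : ℝ) 1, ∫⁻ x in Metric.ball (0 : E) 1, G y x := by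
  have hP := measurable_travellingMass ha δ v hF
  calc (J : ENNReal) * (ENNReal.ofReal c * m)
      = ∑ _ ∈ Finset.range J, ENNReal.ofReal c * m := by simp
    _ ≤ ∑ j ∈ Finset.range J,
          16 * ∫⁻ w, (window c).indicator (travellingMass a δ v F (j / J)) w := by
        refine Finset.sum_le_sum fun j hj => ?_
        exact ofReal_mul_le_lintegral_window (by linarith) (hP _) <|
          hm _ (natCast_div_mem_Ico (Finset.mem_range.1 hj))
    _ = 16 * ∫⁻ y, ∑ j ∈ Finset.range J,
          (window c).indicator (travellingMass a δ v F (j / J)) (y + v * (j / J)) := by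
        have hmeas : ∀ j ∈ Finset.range J, Measurable fun y : ℝ =>
            (window c).indicator (travellingMass a δ v F (j / J)) (y + v * (j / J)) :=
          fun j _ => ((hP _).indicator (measurableSet_window c)).comp (measurable_add_const _)
        rw [← Finset.mul_sum, lintegral_finsetSum _ hmeas]
        congr 2 with j
        exact (lintegral_add_right_eq_self _ _).symm
    _ ≤ 16 * ∫⁻ y, (Set.Ioo (-1 : ℝ) 1).indicator
          (fun y => ∫⁻ x in Metric.ball (0 : E) 1, G y x) y := by
        gcongr with y
        exact sum_indicator_travellingMass_le hδ hc hv0 hv hgap hG y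
    _ = _ := by rw [lintegral_indicator measurableSet_Ioo]

end Summation

section Weighted

variable {E : Type*} [NormedAddCommGroup E] [InnerProductSpace ℝ E] [FiniteDimensional ℝ E]
  [MeasurableSpace E] [BorelSpace E]

theorem rpow_le_one_add {q r : ℝ} (hq : 0 ≤ q) (hr0 : 0 ≤ r) (hr1 : r ≤ 1) : q ^ r ≤ 1 + q :=
  calc q ^ r ≤ (1 + q) ^ r := rpow_le_rpow hq (by linarith) hr0
    _ ≤ (1 + q) ^ (1 : ℝ) := rpow_le_rpow_of_exponent_le (by linarith) hr1
    _ = 1 + q := rpow_one _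

theorem one_add_sq_rpow_le {s k N : ℝ} (hs1 : s ≤ 1) (hN : 1 ≤ N) :
    (1 + k ^ 2) ^ s ≤ N ^ (2 * max s 0) * (4 + 1 / N ^ 4 * (k ^ 2 - N ^ 2) ^ 2) := by
  have hN0 : 0 < N := by linarith
  have hN2 : 1 / N ^ 2 ≤ 1 := (div_le_one (by positivity)).2 (one_le_pow₀ hN)
  set u := (k ^ 2 - N ^ 2) / N ^ 2 with hu
  have hq : (1 + k ^ 2) / N ^ 2 = 1 / N ^ 2 + 1 + u := by
    rw [hu]
    field_simp
    ring
  calc (1 + k ^ 2) ^ s ≤ (1 + k ^ 2) ^ max s 0 :=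
        rpow_le_rpow_of_exponent_le (by nlinarith) (le_max_left _ _)
    _ = N ^ (2 * max s 0) * ((1 + k ^ 2) / N ^ 2) ^ max s 0 := by
        rw [rpow_mul hN0.le, rpow_two, ← mul_rpow (by positivity) (by positivity),
          mul_div_cancel₀ _ (by positivity)]
    _ ≤ N ^ (2 * max s 0) * (1 + (1 + k ^ 2) / N ^ 2) := by
        gcongr
        exact rpow_le_one_add (by positivity) (le_max_right _ _) (max_le hs1 zero_le_one)
    _ ≤ N ^ (2 * max s 0) * (4 + u ^ 2) := by
        refine mul_le_mul_of_nonneg_left ?_ (by positivity)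
        rw [hq]
        nlinarith [sq_nonneg (u - 1 / 2)]
    _ = N ^ (2 * max s 0) * (4 + 1 / N ^ 4 * (k ^ 2 - N ^ 2) ^ 2) := by
        rw [hu]
        field_simp

theorem lintegral_rpow_mul_norm_sq_le {F : E → ℂ} (hF : Measurable F) {s N : ℝ} (hs1 : s ≤ 1)
    (hN : 1 ≤ N) :
    ∫⁻ η, ENNReal.ofReal ((1 + (2 * π * ‖η‖) ^ 2) ^ s * ‖F η‖ ^ 2) ≤
      ENNReal.ofReal (N ^ (2 * max s 0)) * (4 * (∫⁻ η, ‖F η‖ₑ ^ 2) +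
        ENNReal.ofReal (1 / N ^ 4) *
          ∫⁻ η, ‖(((2 * π * ‖η‖) ^ 2 - N ^ 2 : ℝ) : ℂ) * F η‖ₑ ^ 2) := by
  rw [← lintegral_const_mul' 4 _ (by simp), ← lintegral_const_mul' _ _ ENNReal.ofReal_ne_top,
    ← lintegral_add_left (by fun_prop), ← lintegral_const_mul' _ _ ENNReal.ofReal_ne_top]
  refine lintegral_mono fun η => ?_
  rw [enorm_ofReal_mul_sq, ← mul_assoc (ENNReal.ofReal (1 / N ^ 4)), ← add_mul, ← mul_assoc,
    ← ENNReal.ofReal_mul (by positivity), ← ENNReal.ofReal_ofNat 4,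
    ← ENNReal.ofReal_add (by positivity) (by positivity), ← ENNReal.ofReal_mul (by positivity),
    ENNReal.ofReal_mul (by positivity), ENNReal.ofReal_pow (norm_nonneg _), ofReal_norm]
  gcongr
  exact one_add_sq_rpow_le hs1 hN

theorem IsCutoff.lintegral_rpow_mul_norm_packetHat_sq_le [Nontrivial E] {φ : ℝ → ℝ} {M δ N s : ℝ}
    (hφ : IsCutoff φ M) (hδ : 8 ≤ δ) (hN : δ ≤ N) (hs1 : s ≤ 1) :
    ∫⁻ η, ENNReal.ofReal ((1 + (2 * π * ‖η‖) ^ 2) ^ s * ‖packetHat E φ δ N η‖ ^ 2) ≤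
      ENNReal.ofReal (N ^ (2 * max s 0) * (4 + (centrifugalConst E ^ 2 + 36 * M ^ 2))) *
        radialMass E (packet φ δ N) := by
  have hN0 : 0 < N := by linarith
  have hmass : ∫⁻ η, ‖packetHat E φ δ N η‖ₑ ^ 2 = radialMass E (packet φ δ N) :=
    (hφ.isProfile_packet hδ N).lintegral_enorm_fourier_radialFn_sq (by norm_num) _
  refine (lintegral_rpow_mul_norm_sq_le (hφ.measurable_packetHat hδ N) hs1
    (by linarith : 1 ≤ N)).trans ?_
  rw [ENNReal.ofReal_mul (by positivity), mul_assoc, ENNReal.ofReal_add (by norm_num)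
    (by positivity), add_mul, ENNReal.ofReal_ofNat, hmass]
  refine mul_le_mul_right (add_le_add_right ?_ _) _
  calc _ ≤ ENNReal.ofReal (1 / N ^ 4) *
          (ENNReal.ofReal ((centrifugalConst E ^ 2 + 36 * M ^ 2) * N ^ 2 * δ ^ 2) *
            radialMass E (packet φ δ N)) := by
        gcongr
        exact hφ.lintegral_enorm_sq_sub_sq_mul_fourier_packet_sq_le hδ hN
    _ ≤ ENNReal.ofReal (centrifugalConst E ^ 2 + 36 * M ^ 2) * radialMass E (packet φ δ N) := by
        rw [← mul_assoc, ← ENNReal.ofReal_mul (by positivity)]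
        gcongr
        rw [one_div, inv_mul_le_iff₀ (by positivity)]
        calc (centrifugalConst E ^ 2 + 36 * M ^ 2) * N ^ 2 * δ ^ 2
            ≤ (centrifugalConst E ^ 2 + 36 * M ^ 2) * N ^ 2 * N ^ 2 := by gcongr
          _ = N ^ 4 * (centrifugalConst E ^ 2 + 36 * M ^ 2) := by ring

end Weighted

section Maximal

variable {E : Type*} [NormedAddCommGroup E] [InnerProductSpace ℝ E] [MeasurableSpace E]
  [BorelSpace E] [FiniteDimensional ℝ E]

/-- The maximal function of the evolution over times in `(-1, 1)`. -/
def waveMax (a : ℝ) (F : E → ℂ) (y : ℝ) (x : E) : ℝ :=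
  ⨆ t : Set.Ioo (-1 : ℝ) 1, ‖waveEvol a F y t x‖

theorem bddAbove_norm_waveEvol (a : ℝ) (F : E → ℂ) (y : ℝ) (x : E) :
    BddAbove (Set.range fun t : Set.Ioo (-1 : ℝ) 1 => ‖waveEvol a F y t x‖) :=
  ⟨∫ η, ‖F η‖, Set.forall_mem_range.2 fun t => norm_waveEvol_le a F y t x⟩

theorem enorm_waveEvol_sq_le (a : ℝ) (F : E → ℂ) (y : ℝ) (x : E) {t : ℝ}
    (ht : t ∈ Set.Ioo (-1 : ℝ) 1) :
    ‖waveEvol a F y t x‖ₑ ^ 2 ≤ ENNReal.ofReal (waveMax a F y x ^ 2) := by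
  rw [← ofReal_norm, ← ENNReal.ofReal_pow (norm_nonneg _)]
  gcongr
  exact le_ciSup (bddAbove_norm_waveEvol a F y x) ⟨t, ht⟩

theorem norm_waveMax_sq_le (a : ℝ) (F : E → ℂ) (y : ℝ) (x : E) :
    ‖waveMax a F y x ^ 2‖ ≤ (∫ η, ‖F η‖) ^ 2 := by
  have hnonneg : 0 ≤ waveMax a F y x := Real.iSup_nonneg fun _ => norm_nonneg _
  have hle : waveMax a F y x ≤ ∫ η, ‖F η‖ :=
    Real.iSup_le (fun t => norm_waveEvol_le a F y t x) (integral_nonneg fun _ => norm_nonneg _)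
  rw [norm_pow, Real.norm_of_nonneg hnonneg]
  gcongr

theorem measurable_waveMax {a : ℝ} (ha : 0 < a) {F : E → ℂ} (hF : Integrable F) :
    Measurable fun q : ℝ × E => waveMax a F q.1 q.2 :=
  LowerSemicontinuous.measurable <|
    lowerSemicontinuous_ciSup (fun q => bddAbove_norm_waveEvol a F q.1 q.2) fun t =>
      ((continuous_waveEvol ha hF).comp
        (by fun_prop : Continuous fun q : ℝ × E => ((q.1, (t : ℝ)), q.2))).norm.lowerSemicontinuous

theorem lintegral_waveMax_sq_eq {a : ℝ} (ha : 0 < a) {F : E → ℂ} (hF : Integrable F) :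
    ∫⁻ y in Set.Ioo (-1 : ℝ) 1, ∫⁻ x in Metric.ball (0 : E) 1,
        ENNReal.ofReal (waveMax a F y x ^ 2) =
      ENNReal.ofReal (∫ y in Set.Ioo (-1 : ℝ) 1, ∫ x in Metric.ball (0 : E) 1,
        waveMax a F y x ^ 2) := by
  have hmeas := (measurable_waveMax ha hF).pow_const 2
  have hinner : ∀ y, ∫⁻ x in Metric.ball (0 : E) 1, ENNReal.ofReal (waveMax a F y x ^ 2) =
      ENNReal.ofReal (∫ x in Metric.ball (0 : E) 1, waveMax a F y x ^ 2) := fun y =>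
    (ofReal_integral_eq_lintegral_ofReal
      (IntegrableOn.of_bound measure_ball_lt_top
        (hmeas.comp measurable_prodMk_left).aestronglyMeasurable _
        (.of_forall (norm_waveMax_sq_le a F y)))
      (.of_forall fun x => sq_nonneg _)).symm
  simp only [hinner]
  refine (ofReal_integral_eq_lintegral_ofReal ?_
    (.of_forall fun y => integral_nonneg fun x => sq_nonneg _)).symm
  exact IntegrableOn.of_bound (by simp)
    hmeas.stronglyMeasurable.integral_prod_right.aestronglyMeasurable _ <| .of_forall fun y =>
      norm_setIntegral_le_of_norm_le_const measure_ball_lt_top fun x _ =>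
        norm_waveMax_sq_le a F y x

end Maximal

section Scales

variable (E : Type*) [NormedAddCommGroup E] [InnerProductSpace ℝ E]

/-- The constraints tying the frequency `N` and the width `1 / δ` of a packet to the displacement
scale `c` and the number `J` of times: the packets at displacement `2 * c` are still accurate, and
they visit disjoint shells of the unit ball at the times `j / J`. -/
structure AdmissibleScales (a M c δ N : ℝ) (J : ℕ) : Prop where
  eight_le : 8 ≤ δ
  le_frequency : δ ≤ N
  one_div_le : 1 / δ ≤ c
  le_one_div_sixteen : c ≤ 1 / 16
  packetError_le : packetError E a M δ N (2 * c) ≤ 1 / 4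
  groupVelocity_le : groupVelocity a N ≤ 2 * c
  two_div_le : 2 / δ ≤ groupVelocity a N / J

theorem exists_pos_le_mul_pow_le (A : ℝ) {b B : ℝ} (hb : 0 < b) (hB : 0 < B) {k : ℕ}
    (hk : k ≠ 0) : ∃ ε > 0, ε ≤ b ∧ A * ε ^ k ≤ B := by
  have hlim : Filter.Tendsto (fun ε : ℝ => A * ε ^ k) (nhdsWithin 0 (Set.Ioi 0)) (nhds 0) := by
    have hcont : Continuous fun ε : ℝ => A * ε ^ k := by fun_prop
    simpa [hk] using (hcont.tendsto 0).mono_left nhdsWithin_le_nhds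
  obtain ⟨ε, ⟨hε, hεb⟩, hεB⟩ :=
    ((Filter.eventually_mem_set.2 (Ioc_mem_nhdsGT hb)).and (hlim.eventually_le_const hB)).exists
  exact ⟨ε, hε, hεb, hεB⟩

theorem rpow_sub_two_mul_sq {a X : ℝ} (hX : 0 < X) (ha : 0 < a) (ε : ℝ) :
    (X ^ (2 / a)) ^ (a - 2) * (ε * X ^ (2 / a - 1)) ^ 2 = ε ^ 2 := by
  rw [mul_pow, ← rpow_two (X ^ (2 / a - 1)), ← rpow_mul hX.le, ← rpow_mul hX.le, mul_left_comm,
    ← rpow_add hX]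
  have hexp : 2 / a * (a - 2) + (2 / a - 1) * 2 = 0 := by
    field_simp
    ring
  rw [hexp, rpow_zero, mul_one]

theorem groupVelocity_rpow {a X : ℝ} (hX : 0 < X) (ha : 0 < a) :
    groupVelocity a (X ^ (2 / a)) = a * X / X ^ (2 / a - 1) := by
  have hexp : 2 / a * (a - 1) = 1 - (2 / a - 1) := by
    field_simp
    ring
  rw [groupVelocity, ← rpow_mul hX.le, hexp, rpow_sub hX, rpow_one, mul_div_assoc]

theorem tendsto_groupVelocity_atTop {a : ℝ} (ha1 : a < 1) :
    Filter.Tendsto (groupVelocity a) Filter.atTop (nhds 0) := by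
  have hlim := (tendsto_rpow_neg_atTop (by linarith : 0 < 1 - a)).const_mul a
  rwa [neg_sub, mul_zero] at hlim

-- The width `δ` is the largest one allowed by the dispersion error `N ^ (a - 2) * δ ^ 2`, and
-- `J` the largest number of times for which consecutive shells, `v / J` apart, stay disjoint.
theorem exists_admissibleScales {a : ℝ} (ha : 0 < a) (ha1 : a < 1) (M : ℝ) :
    ∃ c > 0, ∃ K > 0, ∀ᶠ J : ℕ in Filter.atTop,
      ∃ δ, AdmissibleScales E a M c δ ((K * J) ^ (2 / a)) J := by
  obtain ⟨ε, hε, hε1, hεerr⟩ := exists_pos_le_mul_pow_le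
    (16 * (centrifugalConst E ^ 2 + 36 * M ^ 2)) one_pos (by norm_num : (0 : ℝ) < 1 / 8)
    two_ne_zero
  obtain ⟨c, hc, hc16, hcerr⟩ := exists_pos_le_mul_pow_le
    (2048 * centrifugalConst E ^ 2 * 2 ^ 4) (by norm_num : (0 : ℝ) < 1 / 16)
    (by norm_num : (0 : ℝ) < 1 / 8) four_ne_zero
  have hK : 0 < 2 / (a * ε) := by positivity
  have hexp : 0 < 2 / a - 1 := by
    rw [sub_pos, lt_div_iff₀ ha]
    linarith
  have hX : Filter.Tendsto (fun J : ℕ => 2 / (a * ε) * (J : ℝ)) Filter.atTop Filter.atTop :=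
    tendsto_natCast_atTop_atTop.const_mul_atTop hK
  have hδ := (tendsto_rpow_atTop hexp).const_mul_atTop hε
  have hv := (tendsto_groupVelocity_atTop ha1).comp (tendsto_rpow_atTop (by positivity : 0 < 2 / a))
  refine ⟨c, hc, 2 / (a * ε), hK, ?_⟩
  filter_upwards [hX.eventually (Filter.eventually_ge_atTop 1),
    hX.eventually (hδ.eventually_ge_atTop 8), hX.eventually (hδ.eventually_ge_atTop (1 / c)),
    hX.eventually (hv.eventually_le_const (by positivity : 0 < 2 * c))] with J hX1 hδ8 hδc hvc
  set X := 2 / (a * ε) * (J : ℝ) with hXJ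
  have hX0 : 0 < X := by linarith
  have hJ : (J : ℝ) ≠ 0 := right_ne_zero_of_mul hX0.ne'
  refine ⟨ε * X ^ (2 / a - 1), hδ8, ?_, ?_, hc16, ?_, hvc, le_of_eq ?_⟩
  · calc ε * X ^ (2 / a - 1) ≤ 1 * X ^ (2 / a) := by
          gcongr
          linarith
      _ = X ^ (2 / a) := one_mul _
  · rwa [div_le_comm₀ (by linarith) hc]
  · rw [packetError, rpow_sub_two_mul_sq hX0 ha]
    linarith
  · rw [groupVelocity_rpow hX0 ha]
    have haX : a * X = 2 / ε * J := by
      rw [hXJ]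
      field_simp
    rw [haX]
    field_simp

end Scales

section Normalization

theorem FT_smul_two_pi (n : ℕ) (f : EuclideanSpace ℝ (Fin n) → ℂ)
    (η : EuclideanSpace ℝ (Fin n)) : FT n f ((2 * π) • η) = 𝓕 f η := by
  rw [FT, Real.fourier_eq']
  congr 1 with x
  rw [smul_eq_mul, inner_smul_right]
  congr 2
  push_cast
  ring

theorem integral_eq_two_pi_pow_smul {n : ℕ} {F : Type*} [NormedAddCommGroup F] [NormedSpace ℝ F]
    (g : EuclideanSpace ℝ (Fin n) → F) :
    ∫ ξ, g ξ = (2 * π) ^ n • ∫ η, g ((2 * π) • η) := by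
  have hpos : 0 < (2 * π) ^ n := by positivity
  rw [Measure.integral_comp_smul, finrank_euclideanSpace_fin, abs_of_pos (inv_pos.2 hpos),
    smul_smul, mul_inv_cancel₀ hpos.ne', one_smul]

theorem SoscHat_exp_mul_FT (n : ℕ) (a : ℝ) (f : EuclideanSpace ℝ (Fin n) → ℂ) (y t : ℝ)
    (x : EuclideanSpace ℝ (Fin n)) :
    SoscHat n a (fun ξ => Complex.exp (Complex.I * ((y * ‖ξ‖ : ℝ) : ℂ)) * FT n f ξ) x t =
      waveEvol a (𝓕 f) y t x := by
  have hpos : ((2 * π) ^ n : ℝ) ≠ 0 := by positivity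
  rw [SoscHat, integral_eq_two_pi_pow_smul, Complex.real_smul, ← mul_assoc,
    inv_mul_cancel₀ (by exact_mod_cast hpos), one_mul, waveEvol, Real.fourierInv_eq']
  congr 1 with η
  rw [FT_smul_two_pi, norm_smul, inner_smul_right, Real.norm_of_nonneg (by positivity : 0 ≤ 2 * π),
    smul_eq_mul, real_inner_comm, wavePhase]
  simp only [← mul_assoc, ← Complex.exp_add]
  congr 2
  push_cast
  ring

theorem integral_rpow_mul_norm_FT_sq (n : ℕ) (s : ℝ) (f : EuclideanSpace ℝ (Fin n) → ℂ) :
    ∫ ξ, (1 + ‖ξ‖ ^ 2) ^ s * ‖FT n f ξ‖ ^ 2 =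
      (2 * π) ^ n * ∫ η, (1 + (2 * π * ‖η‖) ^ 2) ^ s * ‖𝓕 f η‖ ^ 2 := by
  rw [integral_eq_two_pi_pow_smul, smul_eq_mul]
  congr 2 with η
  rw [FT_smul_two_pi, norm_smul, Real.norm_of_nonneg (by positivity : 0 ≤ 2 * π)]

end Normalization

section Endgame

variable (E : Type*) [NormedAddCommGroup E] [InnerProductSpace ℝ E] [FiniteDimensional ℝ E]
  [MeasurableSpace E] [BorelSpace E]

/-- The local maximal estimate for radial functions on `E`, averaged over the half-wave time `y`,
with loss of `s` derivatives and constant `C`. Fourier transforms are normalized as in Mathlib, so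
the frequency is `2 * π * η`. -/
def RadialMaximalEstimate (a s C : ℝ) : Prop :=
  ∀ f : E → ℂ, ContDiff ℝ (⊤ : ℕ∞) f → HasCompactSupport f → 0 ∉ tsupport f →
    (∀ x y : E, ‖x‖ = ‖y‖ → f x = f y) →
    ∫ y in Set.Ioo (-1 : ℝ) 1, ∫ x in Metric.ball (0 : E) 1, waveMax a (𝓕 f) y x ^ 2 ≤
      C * ∫ η, (1 + (2 * π * ‖η‖) ^ 2) ^ s * ‖𝓕 f η‖ ^ 2

variable {E} {φ : ℝ → ℝ} {a s c C M δ N : ℝ} {J : ℕ}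

theorem ofReal_integral_le_lintegral {X : Type*} [MeasurableSpace X] {μ : Measure X} {g : X → ℝ}
    (hg : ∀ x, 0 ≤ g x) : ENNReal.ofReal (∫ x, g x ∂μ) ≤ ∫⁻ x, ENNReal.ofReal (g x) ∂μ := by
  simp only [← Real.enorm_of_nonneg (hg _)]
  exact (Real.ofReal_le_enorm _).trans (enorm_integral_le_lintegral_enorm g)

theorem IsCutoff.radialMass_packet_ne_zero [Nontrivial E] (hφ : IsCutoff φ M) (hδ : 8 ≤ δ)
    (N : ℝ) : radialMass E (packet φ δ N) ≠ 0 := by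
  have hδ0 : 0 < δ := by linarith
  rw [(hφ.isProfile_packet hδ N).radialMass_eq (by norm_num)]
  refine mul_ne_zero (Measure.measure_univ_ne_zero.2 (Measure.toSphere_ne_zero _)) ?_
  exact ((ENNReal.ofReal_pos.2 (one_div_pos.2 hδ0)).trans_le (hφ.le_lintegral_packet hδ0 N)).ne'

theorem IsCutoff.lintegral_waveMax_packetHat_sq_le [Nontrivial E] (hφ : IsCutoff φ M)
    (hδ : 8 ≤ δ) (hN : δ ≤ N) (ha : 0 < a) (hs1 : s ≤ 1) (hC : 0 < C)
    (hest : RadialMaximalEstimate E a s C) :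
    ∫⁻ y in Set.Ioo (-1 : ℝ) 1, ∫⁻ x in Metric.ball (0 : E) 1,
        ENNReal.ofReal (waveMax a (packetHat E φ δ N) y x ^ 2) ≤
      ENNReal.ofReal (C * (N ^ (2 * max s 0) * (4 + (centrifugalConst E ^ 2 + 36 * M ^ 2)))) *
        radialMass E (packet φ δ N) := by
  have hα : (0 : ℝ) < 3 / 8 := by norm_num
  have hf := (hφ.isProfile_packet hδ N).rpow_mul hα (halfDensityExp E)
  have hbound := hest (radialFn (halfDensityExp E) (packet φ δ N)) (hf.contDiff_comp_norm hα)
    hf.hasCompactSupport_comp_norm (hf.zero_notMem_tsupport hα)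
    fun x y hxy => by rw [radialFn, radialFn, hxy]
  rw [lintegral_waveMax_sq_eq ha (hφ.integrable_packetHat hδ N), ENNReal.ofReal_mul hC.le,
    mul_assoc]
  calc _ ≤ ENNReal.ofReal (C * ∫ η, (1 + (2 * π * ‖η‖) ^ 2) ^ s * ‖packetHat E φ δ N η‖ ^ 2) :=
        ENNReal.ofReal_le_ofReal hbound
    _ ≤ _ := by
        rw [ENNReal.ofReal_mul hC.le]
        gcongr
        exact (ofReal_integral_le_lintegral fun η => by positivity).trans
          (hφ.lintegral_rpow_mul_norm_packetHat_sq_le hδ hN hs1)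

theorem IsCutoff.natCast_mul_radialMass_le [Nontrivial E] (hφ : IsCutoff φ M)
    (hsc : AdmissibleScales E a M c δ N J) (ha : 0 < a) (ha1 : a < 1) :
    J * (ENNReal.ofReal c * radialMass E (packet φ δ N)) ≤
      16 * ∫⁻ y in Set.Ioo (-1 : ℝ) 1, ∫⁻ x in Metric.ball (0 : E) 1,
        ENNReal.ofReal (waveMax a (packetHat E φ δ N) y x ^ 2) := by
  have hδ := hsc.eight_le
  have hN0 : 0 < N := by linarith [hsc.le_frequency]
  have hc16 := hsc.le_one_div_sixteen
  refine natCast_mul_le_lintegral_of_travellingMass ha hδ hc16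
    (mul_pos ha (rpow_pos_of_pos hN0 _)) hsc.groupVelocity_le hsc.two_div_le
    (hφ.integrable_packetHat hδ N) (fun t ht z hz => ?_)
    fun y x t ht => enorm_waveEvol_sq_le a _ y x ⟨by linarith [ht.1], ht.2⟩
  have hcz : 1 / δ ≤ z := hsc.one_div_le.trans hz.1.le
  have hz0 : 0 ≤ z := le_trans (by positivity) hcz
  refine hφ.radialMass_le_travellingMass hδ hsc.le_frequency ha ha1 hcz (by linarith [hz.2])
    (abs_le.2 ⟨by linarith [ht.1], ht.2.le⟩) (le_trans ?_ hsc.packetError_le)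
  rw [packetError, packetError]
  gcongr
  exact hz.2.le

theorem IsCutoff.natCast_mul_le_of_radialMaximalEstimate [Nontrivial E] (hφ : IsCutoff φ M)
    (hsc : AdmissibleScales E a M c δ N J) (ha : 0 < a) (ha1 : a < 1) (hs1 : s ≤ 1) (hC : 0 < C)
    (hest : RadialMaximalEstimate E a s C) :
    J * c ≤ 16 * C * (4 + (centrifugalConst E ^ 2 + 36 * M ^ 2)) * N ^ (2 * max s 0) := by
  have hδ := hsc.eight_le
  have hN0 : 0 < N := by linarith [hsc.le_frequency]
  set D := 4 + (centrifugalConst E ^ 2 + 36 * M ^ 2)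
  have : 0 ≤ D := by positivity
  have hmass : ENNReal.ofReal (J * c) * radialMass E (packet φ δ N) ≤
      ENNReal.ofReal (16 * C * D * N ^ (2 * max s 0)) * radialMass E (packet φ δ N) := by
    calc ENNReal.ofReal (J * c) * radialMass E (packet φ δ N)
        = J * (ENNReal.ofReal c * radialMass E (packet φ δ N)) := by
          rw [ENNReal.ofReal_mul (by positivity), ENNReal.ofReal_natCast, mul_assoc]
      _ ≤ 16 * _ := hφ.natCast_mul_radialMass_le hsc ha ha1
      _ ≤ 16 * (ENNReal.ofReal (C * (N ^ (2 * max s 0) * D)) * radialMass E (packet φ δ N)) := by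
          gcongr
          exact hφ.lintegral_waveMax_packetHat_sq_le hδ hsc.le_frequency ha hs1 hC hest
      _ = _ := by
          rw [← mul_assoc, ← ENNReal.ofReal_ofNat 16, ← ENNReal.ofReal_mul (by norm_num)]
          congr 2
          ring
  have hm := (hφ.isProfile_packet hδ N).radialMass_ne_top (E := E) (by norm_num)
  rw [ENNReal.mul_le_mul_iff_left (hφ.radialMass_packet_ne_zero hδ N) hm] at hmass
  exact (ENNReal.ofReal_le_ofReal_iff (by positivity)).1 hmass

theorem one_le_of_eventually_natCast_mul_le {A B q : ℝ} (hA : 0 < A)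
    (h : ∀ᶠ J : ℕ in Filter.atTop, J * A ≤ B * (J : ℝ) ^ q) : 1 ≤ q := by
  by_contra! hq
  have hlim : Filter.Tendsto (fun J : ℕ => (J : ℝ) ^ (1 - q)) Filter.atTop Filter.atTop :=
    (tendsto_rpow_atTop (by linarith)).comp tendsto_natCast_atTop_atTop
  obtain ⟨J, hle, hgt, hJ⟩ :=
    (h.and ((hlim.eventually_gt_atTop (B / A)).and (Filter.eventually_gt_atTop 0))).exists
  have hJ0 : (0 : ℝ) < J := by exact_mod_cast hJ
  rw [rpow_sub hJ0, rpow_one, div_lt_div_iff₀ hA (by positivity)] at hgt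
  linarith

theorem stmt8_general [Nontrivial E] (ha : 0 < a) (ha1 : a < 1) (hC : 0 < C)
    (hest : RadialMaximalEstimate E a s C) : a / 4 ≤ s := by
  rcases le_or_gt s 1 with hs1 | hs1
  swap
  · linarith
  obtain ⟨φ, M, hφ⟩ := exists_isCutoff
  obtain ⟨c, hc, K, hK, hscales⟩ := exists_admissibleScales E ha ha1 M
  set D := 16 * C * (4 + (centrifugalConst E ^ 2 + 36 * M ^ 2))
  have hgrowth : ∀ᶠ J : ℕ in Filter.atTop, J * c ≤
      D * K ^ (2 / a * (2 * max s 0)) * (J : ℝ) ^ (2 / a * (2 * max s 0)) := by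
    filter_upwards [hscales] with J ⟨δ, hsc⟩
    refine (hφ.natCast_mul_le_of_radialMaximalEstimate hsc ha ha1 hs1 hC hest).trans_eq ?_
    rw [← rpow_mul (by positivity), mul_rpow hK.le (by positivity), ← mul_assoc]
  have hone := one_le_of_eventually_natCast_mul_le hc hgrowth
  have hmax : a / 4 ≤ max s 0 := by
    rw [div_mul_eq_mul_div, le_div_iff₀ ha] at hone
    linarith
  exact (le_max_iff.1 hmax).resolve_right (by linarith)

end Endgame

theorem stmt8 (n : ℕ) (hn : 2 ≤ n) (a : ℝ) (ha : 0 < a) (ha1 : a < 1) (s : ℝ)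
    (h : ∃ C > 0, ∀ f : EuclideanSpace ℝ (Fin n) → ℂ,
      ContDiff ℝ (⊤ : ℕ∞) f → HasCompactSupport f → 0 ∉ tsupport f →
      (∀ x y : EuclideanSpace ℝ (Fin n), ‖x‖ = ‖y‖ → f x = f y) →
      (∫ y in Set.Ioo (-1 : ℝ) 1,
        ∫ x in Metric.ball (0 : EuclideanSpace ℝ (Fin n)) 1,
          (⨆ t : Set.Ioo (-1 : ℝ) 1,
            ‖SoscHat n a (fun ξ => Complex.exp (Complex.I * ((y * ‖ξ‖ : ℝ) : ℂ)) * FT n f ξ)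
              x t‖) ^ 2)
        ≤ C * ∫ ξ, (1 + ‖ξ‖ ^ 2) ^ s * ‖FT n f ξ‖ ^ 2) :
    a / 4 ≤ s := by
  obtain ⟨C, hC, hest⟩ := h
  simp only [SoscHat_exp_mul_FT, integral_rpow_mul_norm_FT_sq, ← mul_assoc] at hest
  have : Nonempty (Fin n) := ⟨0, by omega⟩
  exact stmt8_general ha ha1 (by positivity : 0 < C * (2 * π) ^ n) hest
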